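/- Let k be a field of odd prime characteristic p and let (α|β) be a pair of compositions with |α| + |β| = n. For pairs (ξ, μ) of partitions with |α| + |ξ| + p|μ| = n write c(ξ,μ) = c^(p)_{β;(ξ,pμ)}. Then there is an isomorphism of kS_n-modules M(α|β) ⊕ ⨁_{(ξ,μ): c(ξ,μ) < 0} M(α∪ξ|pμ)^{⊕(−c(ξ,μ))} ≅ ⨁_{(ξ,μ): c(ξ,μ) > 0} M(α∪ξ|pμ)^{⊕ c(ξ,μ)}, where both direct sums run over pairs (ξ, μ) of partitions with |α| + |ξ| + p|μ| = n and pμ = (pμ_1,...,pμ_{ℓ(μ)}). -/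

import Mathlib

noncomputable section
open scoped DirectSum

/-- The index of the block (among consecutive blocks of sizes `γ_1, γ_2, …`) containing
position `x`; blocks are numbered starting from `0`. -/
def blockIdx (γ : List ℕ) (x : ℕ) : ℕ :=
  (List.range γ.length).countP fun j => decide ((γ.take (j + 1)).sum ≤ x)

/-- The Young subgroup of `S_n` attached to the finite sequence `γ`: permutations mapping
each of the consecutive blocks of sizes `γ_1, γ_2, …` to itself. -/
def youngSubgroup (n : ℕ) (γ : List ℕ) : Subgroup (Equiv.Perm (Fin n)) where
  carrier := {σ | ∀ x : Fin n, blockIdx γ (σ x) = blockIdx γ x}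
  one_mem' := fun _ => rfl
  mul_mem' := by
    intro a b ha hb x
    simpa [Equiv.Perm.mul_apply] using (ha (b x)).trans (hb x)
  inv_mem' := by
    intro a ha x
    simpa using (ha (a⁻¹ x)).symm

lemma youngSubgroup_mem {n : ℕ} {γ : List ℕ} (σ : youngSubgroup n γ) :
    ∀ x : Fin n, blockIdx γ ((σ : Equiv.Perm (Fin n)) x) = blockIdx γ x := σ.2

/-- Restriction of an element of a Young subgroup to the `j`-th block. -/
def blockRestrict (n : ℕ) (γ : List ℕ) (j : ℕ) :
    youngSubgroup n γ →* Equiv.Perm {x : Fin n // blockIdx γ (x : ℕ) = j} where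
  toFun σ := Equiv.Perm.subtypePerm (σ : Equiv.Perm (Fin n)) (fun x => by
    rw [youngSubgroup_mem σ x])
  map_one' := by
    ext x
    rfl
  map_mul' := by
    intro a b
    ext x
    rfl

/-- The sign of the restriction of an element of a Young subgroup to the `j`-th block,
viewed in the field `k`. -/
def blockSign (k : Type*) [Field k] (n : ℕ) (γ : List ℕ) (j : ℕ) :
    youngSubgroup n γ →* k :=
  ((Int.castRingHom k).toMonoidHom.comp (Units.coeHom ℤ)).comp
    (Equiv.Perm.sign.comp (blockRestrict n γ j))

/-- The character of the Young subgroup `S_α × S_β` affording `k(α) ⊠ sgn(β)`: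
`σ` acts by the product of the signs of the restrictions of `σ` to the `β`-blocks. -/
def chiHom (k : Type*) [Field k] (n : ℕ) (α β : List ℕ) :
    youngSubgroup n (α ++ β) →* k :=
  ∏ j ∈ Finset.Ico α.length (α.length + β.length), blockSign k n (α ++ β) j

/-- The group algebra `k S_n`. -/
abbrev GA (k : Type*) [Field k] (n : ℕ) : Type _ := MonoidAlgebra k (Equiv.Perm (Fin n))

/-- The left submodule of `k S_n` generated by the elements `σ - χ(σ)·1`, `σ ∈ S_α × S_β`,
where `χ` is the character of `k(α) ⊠ sgn(β)`. -/
def relSub (k : Type*) [Field k] (n : ℕ) (α β : List ℕ) : Submodule (GA k n) (GA k n) :=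
  Submodule.span (GA k n)
    {x | ∃ σ : youngSubgroup n (α ++ β),
      x = MonoidAlgebra.single (σ : Equiv.Perm (Fin n)) 1
            - MonoidAlgebra.single 1 (chiHom k n α β σ)}

/-- The signed Young permutation module
`M(α|β) = Ind_{S_α × S_β}^{S_n} (k(α) ⊠ sgn(β)) = k S_n ⊗_{k(S_α×S_β)} (k(α) ⊠ sgn(β))`,
realized as the quotient of `k S_n` by the left submodule generated by
`σ - χ(σ)·1` for `σ ∈ S_α × S_β`. -/
abbrev SYPM (k : Type*) [Field k] (n : ℕ) (α β : List ℕ) : Type _ :=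
  GA k n ⧸ relSub k n α β

/-- A partition: a weakly decreasing finite sequence of positive integers. -/
def IsPartitionL (l : List ℕ) : Prop := l.Pairwise (· ≥ ·) ∧ ∀ x ∈ l, 0 < x

/-- `c_λ^(p)`: the number of compositions of type `λ` all of whose partial sums are
not divisible by `p`. -/
def numCompM (m : ℕ) (l : List ℕ) : ℕ :=
  (l.permutations.dedup.filter fun δ => decide (∀ j < δ.length, ¬ m ∣ (δ.take (j + 1)).sum)).length

/-- `ε_λ = (-1)^(|λ|-ℓ(λ))`. -/
def epsL (l : List ℕ) : ℤ := (-1) ^ (l.sum - l.length)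

/-- `μ ∈ P(n;m)`: `μ` is a partition with `|μ| ≤ n` and `m ∣ n - |μ|`. -/
def MemPnm (n m : ℕ) (μ : List ℕ) : Prop := IsPartitionL μ ∧ μ.sum ≤ n ∧ m ∣ (n - μ.sum)

/-- Membership of the tuple `L = (ξ^(1), …, ξ^(s))` in `V(β;(ξ,mμ))`. -/
def Vmem (m : ℕ) (β ξ μ : List ℕ) (L : List (List ℕ)) : Prop :=
  L.length = β.length ∧
  (∀ i < β.length, MemPnm (β.getD i 0) m (L.getD i [])) ∧
  List.Perm L.flatten ξ ∧
  List.Perm (((List.range β.length).map fun i => β.getD i 0 - (L.getD i []).sum).filter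
      fun x => decide (x ≠ 0)) (μ.map (m * ·))

/-- `c^(m)_{β;(ξ,mμ)} = ∑_{(ξ^(1),…,ξ^(s)) ∈ V(β;(ξ,mμ))} ∏_i ε_{ξ^(i)} c^(m)_{ξ^(i)}`. -/
def cB (m : ℕ) (β ξ μ : List ℕ) : ℤ :=
  ∑ᶠ L ∈ {L : List (List ℕ) | Vmem m β ξ μ L},
    ∏ i ∈ Finset.range β.length, epsL (L.getD i []) * (numCompM m (L.getD i []) : ℤ)

/-- The weakly decreasing rearrangement of a finite sequence:
`α∪ξ = sortDesc (α ++ ξ)`. -/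
def sortDesc (l : List ℕ) : List ℕ := (Multiset.sort (l : Multiset ℕ) (· ≤ ·)).reverse

/-- The pair `(ξ, μ)` consists of partitions with `|α| + |ξ| + p|μ| = n`. -/
def CondPair (p n : ℕ) (α : List ℕ) (q : List ℕ × List ℕ) : Prop :=
  IsPartitionL q.1 ∧ IsPartitionL q.2 ∧ α.sum + q.1.sum + p * q.2.sum = n

open Classical in
/-- The multiplicity `-c^(p)_{β;(ξ,pμ)}` when this coefficient is negative, else `0`. -/
def negMult (p n : ℕ) (α β : List ℕ) (q : List ℕ × List ℕ) : ℕ :=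
  if CondPair p n α q ∧ cB p β q.1 q.2 < 0 then (-cB p β q.1 q.2).toNat else 0

open Classical in
/-- The multiplicity `c^(p)_{β;(ξ,pμ)}` when this coefficient is positive, else `0`. -/
def posMult (p n : ℕ) (α β : List ℕ) (q : List ℕ × List ℕ) : ℕ :=
  if CondPair p n α q ∧ 0 < cB p β q.1 q.2 then (cB p β q.1 q.2).toNat else 0

/-! isomorphism classes -/
section cls
universe u
variable (R : Type u) [Ring R]

def isoSetoid : Setoid (ModuleCat.{u} R) where
  r M N := Nonempty (M ≃ₗ[R] N)
  iseqv := ⟨fun _ => ⟨LinearEquiv.refl _ _⟩, fun ⟨e⟩ => ⟨e.symm⟩, fun ⟨e⟩ ⟨f⟩ => ⟨e.trans f⟩⟩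

def IsoCls : Type _ := Quotient (isoSetoid R)

def cls (M : Type u) [AddCommGroup M] [Module R M] : IsoCls R :=
  Quotient.mk (isoSetoid R) (ModuleCat.of R M)

variable {R}

lemma cls_eq_iff {M N : Type u} [AddCommGroup M] [Module R M] [AddCommGroup N] [Module R N] :
    cls R M = cls R N ↔ Nonempty (M ≃ₗ[R] N) := Quotient.eq (r := isoSetoid R)

lemma cls_ind {P : IsoCls R → Prop}
    (h : ∀ (M : Type u) [AddCommGroup M] [Module R M], P (cls R M)) (x) : P x := by
  induction x using Quotient.inductionOn with
  | h M => exact h M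

instance : Add (IsoCls R) := ⟨Quotient.map₂ (fun M N => ModuleCat.of R (M × N))
  (by rintro M M' ⟨e⟩ N N' ⟨f⟩; exact ⟨e.prodCongr f⟩)⟩

instance : Zero (IsoCls R) := ⟨cls R PUnit.{u+1}⟩

lemma cls_prod (M N : Type u) [AddCommGroup M] [Module R M] [AddCommGroup N] [Module R N] :
    cls R (M × N) = cls R M + cls R N := rfl

lemma cls_zero (M : Type u) [AddCommGroup M] [Module R M] [Subsingleton M] :
    cls R M = 0 := cls_eq_iff.2 ⟨LinearEquiv.ofSubsingleton _ _⟩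

instance : AddCommMonoid (IsoCls R) where
  add_assoc := by
    intro x y z
    induction x using cls_ind with | h M => ?_
    induction y using cls_ind with | h N => ?_
    induction z using cls_ind with | h L => ?_
    exact cls_eq_iff.2 ⟨LinearEquiv.prodAssoc R M N L⟩
  zero_add := by
    intro x
    induction x using cls_ind with | h M => ?_
    exact cls_eq_iff.2 ⟨LinearEquiv.uniqueProd⟩
  add_zero := by
    intro x
    induction x using cls_ind with | h M => ?_
    exact cls_eq_iff.2 ⟨LinearEquiv.prodUnique⟩
  add_comm := by
    intro x y
    induction x using cls_ind with | h M => ?_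
    induction y using cls_ind with | h N => ?_
    exact cls_eq_iff.2 ⟨LinearEquiv.prodComm R M N⟩
  nsmul := nsmulRec

lemma cls_pi_fin (m : ℕ) (M : Fin m → Type u) [∀ i, AddCommGroup (M i)] [∀ i, Module R (M i)] :
    cls R (∀ i, M i) = ∑ i, cls R (M i) := by
  induction m with
  | zero => simp [cls_zero]
  | succ m ih =>
    rw [Fin.sum_univ_succ, ← ih, ← cls_prod]
    exact cls_eq_iff.2 ⟨(Fin.consLinearEquiv R M).symm⟩

lemma cls_directSum {ι : Type} [Fintype ι] [DecidableEq ι] (M : ι → Type u)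
    [∀ i, AddCommGroup (M i)] [∀ i, Module R (M i)] :
    cls R (⨁ i, M i) = ∑ i, cls R (M i) := by
  classical
  let e := (Fintype.equivFin ι).symm
  rw [← Equiv.sum_comp e, ← cls_pi_fin]
  exact cls_eq_iff.2 ⟨(DirectSum.linearEquivFunOnFintype R ι M).trans
    (LinearEquiv.piCongrLeft R M e).symm⟩

end cls
/-! the sign cocycle and the colouring model -/
section model
open Equiv (Perm)

def sg {n : ℕ} (s : ℕ) (f : Fin n → ℕ) (u : Perm (Fin n)) : ℤˣ :=
  ∏ x, ∏ y, if x < y ∧ f x = f y ∧ s ≤ f x ∧ u y < u x then -1 else 1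

lemma prod_split {n : ℕ} (q : Fin n → Fin n → ℤˣ) (hq : ∀ x, q x x = 1) :
    ∏ x, ∏ y, q x y = ∏ x, ∏ y, if x < y then q x y * q y x else 1 := by
  have h1 : ∏ x, ∏ y, q x y
      = (∏ x, ∏ y, if x < y then q x y else 1) * ∏ x, ∏ y, if y < x then q x y else 1 := by
    simp only [← Finset.prod_mul_distrib]
    refine Finset.prod_congr rfl fun x _ => Finset.prod_congr rfl fun y _ => ?_
    rcases lt_trichotomy x y with h | h | h
    · simp [h, h.not_gt]
    · subst h; simp [hq]
    · simp [h, h.not_gt]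
  have h2 : (∏ x : Fin n, ∏ y : Fin n, if y < x then q x y else 1)
      = ∏ x, ∏ y, if x < y then q y x else 1 := Finset.prod_comm
  rw [h1, h2]
  simp only [← Finset.prod_mul_distrib]
  refine Finset.prod_congr rfl fun x _ => Finset.prod_congr rfl fun y _ => ?_
  split_ifs <;> simp

lemma sg_mul {n : ℕ} (s : ℕ) (f : Fin n → ℕ) (t u : Perm (Fin n)) :
    sg s f (t * u) = sg s (f ∘ ⇑u⁻¹) t * sg s f u := by
  have h : sg s (f ∘ ⇑u⁻¹) t
      = ∏ x, ∏ y, if u x < u y ∧ f x = f y ∧ s ≤ f x ∧ t (u y) < t (u x) then -1 else 1 := by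
    unfold sg
    rw [← Equiv.prod_comp u]
    refine Finset.prod_congr rfl fun x _ => ?_
    rw [← Equiv.prod_comp u]
    simp
  rw [h, prod_split _ (by simp)]
  unfold sg
  simp only [← Finset.prod_mul_distrib]
  refine Finset.prod_congr rfl fun x _ => Finset.prod_congr rfl fun y _ => ?_
  by_cases hxy : x < y
  · by_cases hf : f x = f y
    · by_cases hs : s ≤ f x
      · have hs' : s ≤ f y := hf ▸ hs
        have hu : u x ≠ u y := fun e => hxy.ne (u.injective e)
        have ht : t (u x) ≠ t (u y) := fun e => hu (t.injective e)
        rcases lt_or_gt_of_ne hu with h1 | h1 <;> rcases lt_or_gt_of_ne ht with h2 | h2 <;>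
          simp [hxy, hf, hs', h1, h2, h1.not_gt, h2.not_gt]
      · have hs' : ¬ s ≤ f y := hf ▸ hs
        simp [hs, hs']
    · simp [hf, Ne.symm hf]
  · simp [hxy]

lemma sg_one {n : ℕ} (s : ℕ) (f : Fin n → ℕ) : sg s f 1 = 1 := by
  unfold sg
  refine Finset.prod_eq_one fun x _ => Finset.prod_eq_one fun y _ => ?_
  rw [if_neg]
  rintro ⟨h1, _, _, h2⟩
  exact absurd h1 (by simpa using h2.le)

variable (k : Type*) [Field k]

/-- a sign as a scalar -/
def us (u : ℤˣ) : k := ((u : ℤ) : k)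
@[simp] lemma us_mul (u v : ℤˣ) : us k (u * v) = us k u * us k v := by simp [us]
@[simp] lemma us_one : us k 1 = 1 := by simp [us]
@[simp] lemma us_neg (u : ℤˣ) : us k (-u) = - us k u := by simp [us]
lemma us_mul_self (u : ℤˣ) : us k u * us k u = 1 := by rw [← us_mul]; simp

def Wm (n : ℕ) (_s : ℕ) : Type _ := (Fin n → ℕ) →₀ k

variable {n : ℕ} {s : ℕ}

instance : AddCommGroup (Wm k n s) := inferInstanceAs (AddCommGroup ((Fin n → ℕ) →₀ k))
instance : Module k (Wm k n s) := inferInstanceAs (Module k ((Fin n → ℕ) →₀ k))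

def ee (f : Fin n → ℕ) : Wm k n s := Finsupp.single f (1 : k)

def wlift {V : Type*} [AddCommGroup V] [Module k V] (g : (Fin n → ℕ) → V) : Wm k n s →ₗ[k] V :=
  Finsupp.linearCombination k g

@[simp] lemma wlift_ee {V : Type*} [AddCommGroup V] [Module k V] (g : (Fin n → ℕ) → V)
    (f : Fin n → ℕ) : wlift k g (ee k f : Wm k n s) = g f :=
  (Finsupp.linearCombination_single k (1 : k) f).trans (one_smul _ _)

variable {k} in
lemma wext {V : Type*} [AddCommGroup V] [Module k V] {a b : Wm k n s →ₗ[k] V}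
    (h : ∀ f, a (ee k f) = b (ee k f)) : a = b := Finsupp.lhom_ext' fun f => LinearMap.ext_ring (h f)

def rho (n s : ℕ) : Representation k (Perm (Fin n)) (Wm k n s) where
  toFun u := wlift k fun f => us k (sg s f u) • ee k (f ∘ ⇑u⁻¹)
  map_one' := wext fun f => by simp [sg_one]; 
  map_mul' t u := wext fun f => by
    simp [sg_mul, smul_smul, Function.comp_assoc, mul_comm]
    
@[simp] lemma rho_ee (u : Perm (Fin n)) (f : Fin n → ℕ) :
    rho k n s u (ee k f) = us k (sg s f u) • ee k (f ∘ ⇑u⁻¹) := by simp [rho]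

instance : Module (GA k n) (Wm k n s) :=
  Module.compHom _ (Representation.asAlgebraHom (rho k n s)).toRingHom

lemma single_smul_w (u : Perm (Fin n)) (c : k) (w : Wm k n s) :
    (MonoidAlgebra.single u c : GA k n) • w = c • rho k n s u w := by
  change Representation.asAlgebraHom (rho k n s) (MonoidAlgebra.single u c) w = _
  simp

instance : IsScalarTower k (GA k n) (Wm k n s) where
  smul_assoc c a w := by
    change Representation.asAlgebraHom (rho k n s) (c • a) w
      = c • Representation.asAlgebraHom (rho k n s) a w
    simp

/-- a k-linear map commuting with the group is linear over the group algebra -/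
def mkGA {V : Type*} [AddCommGroup V] [Module k V] [Module (GA k n) V] [IsScalarTower k (GA k n) V]
    {U : Type*} [AddCommGroup U] [Module k U] [Module (GA k n) U] [IsScalarTower k (GA k n) U]
    (g : V →ₗ[k] U) (h : ∀ (u : Perm (Fin n)) v, g ((MonoidAlgebra.single u 1 : GA k n) • v)
      = (MonoidAlgebra.single u 1 : GA k n) • g v) : V →ₗ[GA k n] U :=
  MonoidAlgebra.equivariantOfLinearOfComm g h

@[simp] lemma mkGA_apply {V : Type*} [AddCommGroup V] [Module k V] [Module (GA k n) V] [IsScalarTower k (GA k n) V]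
    {U : Type*} [AddCommGroup U] [Module k U] [Module (GA k n) U] [IsScalarTower k (GA k n) U]
    (g : V →ₗ[k] U) (h) (v : V) : mkGA (n := n) k g h v = g v := rfl

/-! the Koszul operator -/

def flp (a : ℕ) (f : Fin n → ℕ) (x : Fin n) : Fin n → ℕ :=
  Function.update f x (if f x = a then a + 1 else a)

def ep (a : ℕ) (f : Fin n → ℕ) (x : Fin n) : ℤˣ := ∏ y, if y < x ∧ f y = a + 1 then -1 else 1

lemma flp_flp {a : ℕ} {f : Fin n → ℕ} {x : Fin n} (h : f x = a ∨ f x = a + 1) :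
    flp a (flp a f x) x = f := by
  ext y
  unfold flp
  by_cases hy : y = x
  · subst hy; rcases h with h | h <;> simp [h]
  · simp [hy]

lemma flp_same {a : ℕ} {f : Fin n → ℕ} {x : Fin n} :
    flp a f x x = (if f x = a then a + 1 else a) := by simp [flp]
lemma flp_ne {a : ℕ} {f : Fin n → ℕ} {x y : Fin n} (h : y ≠ x) :
    flp a f x y = f y := by simp [flp, h]
lemma flp_in {a : ℕ} {f : Fin n → ℕ} {x y : Fin n} (hx : f x = a ∨ f x = a + 1) :
    (flp a f x y = a ∨ flp a f x y = a + 1) ↔ (f y = a ∨ f y = a + 1) := by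
  by_cases hy : y = x
  · subst hy; rw [flp_same]; rcases hx with h | h <;> simp [h]
  · rw [flp_ne hy]

lemma flp_comm {a : ℕ} {f : Fin n → ℕ} {x y : Fin n} (h : x ≠ y) :
    flp a (flp a f x) y = flp a (flp a f y) x := by
  ext z
  by_cases hzx : z = x
  · subst hzx; rw [flp_ne h, flp_same, flp_same, flp_ne h]
  · by_cases hzy : z = y
    · subst hzy; rw [flp_same, flp_ne hzx, flp_ne hzx, flp_same]
    · rw [flp_ne hzy, flp_ne hzx, flp_ne hzx, flp_ne hzy]

lemma ep_flp_le {a : ℕ} {f : Fin n → ℕ} {x y : Fin n} (h : y ≤ x) :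
    ep a (flp a f x) y = ep a f y := by
  refine Finset.prod_congr rfl fun z _ => ?_
  by_cases hz : z < y
  · rw [flp_ne (hz.trans_le h).ne]
  · simp [hz]

lemma ep_flp_gt {a : ℕ} {f : Fin n → ℕ} {x y : Fin n} (h : x < y) (hx : f x = a ∨ f x = a + 1) :
    ep a (flp a f x) y = - ep a f y := by
  have : ep a (flp a f x) y = (∏ z, if z = x then (-1 : ℤˣ) else 1) * ep a f y := by
    unfold ep
    rw [← Finset.prod_mul_distrib]
    refine Finset.prod_congr rfl fun z _ => ?_
    by_cases hz : z = x
    · subst hz; rw [flp_same]; rcases hx with hx | hx <;> simp [hx, h]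
    · simp [flp_ne hz, hz]
  rw [this]; simp

lemma sg_flp {a : ℕ} {f : Fin n → ℕ} {x : Fin n} (h : f x = a) (u : Perm (Fin n)) :
    ep a f x * sg (a + 1) (flp a f x) u = sg (a + 1) f u * ep a (f ∘ ⇑u⁻¹) (u x) := by
  have h1 : sg (a + 1) (flp a f x) u = sg (a + 1) f u *
      (∏ y, ∏ z, (if y = x then (if x < z ∧ f z = a + 1 ∧ u z < u x then (-1 : ℤˣ) else 1) else 1)
      * (if z = x then (if y < x ∧ f y = a + 1 ∧ u x < u y then (-1 : ℤˣ) else 1) else 1)) := by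
    unfold sg
    simp only [← Finset.prod_mul_distrib]
    refine Finset.prod_congr rfl fun y _ => Finset.prod_congr rfl fun z _ => ?_
    by_cases hy : y = x
    · subst hy
      by_cases hz : z = y
      · subst hz; simp
      · simp [flp_same, h, hz, flp_ne, eq_comm]
    · by_cases hz : z = x
      · subst hz
        rw [flp_same, flp_ne hy]
        simp only [h, hy, if_true, if_false, one_mul]
        by_cases hfy : f y = a
        · simp [hfy]
        · by_cases hfy2 : f y = a + 1 <;> simp [hfy, hfy2]
      · simp [flp_ne, hy, hz]
  have h2 : ep a (f ∘ ⇑u⁻¹) (u x) = ∏ y, if u y < u x ∧ f y = a + 1 then (-1 : ℤˣ) else 1 := by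
    unfold ep
    rw [← Equiv.prod_comp u]; simp
  have h3 : (∏ y, ∏ z, (if y = x then (if x < z ∧ f z = a + 1 ∧ u z < u x then (-1 : ℤˣ) else 1) else 1)
      * (if z = x then (if y < x ∧ f y = a + 1 ∧ u x < u y then (-1 : ℤˣ) else 1) else 1))
      = ∏ y, (if x < y ∧ f y = a + 1 ∧ u y < u x then (-1 : ℤˣ) else 1) *
        (if y < x ∧ f y = a + 1 ∧ u x < u y then (-1 : ℤˣ) else 1) := by
    simp only [Finset.prod_mul_distrib]
    congr 1
    · rw [Finset.prod_comm]
      simp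
    · simp
  rw [h1, h3, h2, mul_left_comm]
  congr 1
  unfold ep
  simp only [← Finset.prod_mul_distrib]
  refine Finset.prod_congr rfl fun y _ => ?_
  by_cases hfy : f y = a + 1
  · have hyx : y ≠ x := by rintro rfl; omega
    have huyx : u y ≠ u x := fun e => hyx (u.injective e)
    rcases lt_or_gt_of_ne hyx with h1 | h1 <;> rcases lt_or_gt_of_ne huyx with h2 | h2 <;>
      simp [hfy, h1, h2, h1.not_gt, h2.not_gt]
  · simp [hfy]

lemma flp_comp {a : ℕ} {f : Fin n → ℕ} {x : Fin n} (u : Perm (Fin n)) :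
    flp a (f ∘ ⇑u⁻¹) (u x) = flp a f x ∘ ⇑u⁻¹ := by
  ext y
  by_cases hy : y = u x
  · subst hy; simp [flp_same]
  · rw [flp_ne hy]
    have : u⁻¹ y ≠ x := by rintro rfl; simp at hy
    simp only [Function.comp_apply]
    rw [flp_ne this]

lemma sg_flp' {a : ℕ} {f : Fin n → ℕ} {x : Fin n} (h : f x = a ∨ f x = a + 1) (u : Perm (Fin n)) :
    ep a f x * sg (a + 1) (flp a f x) u = sg (a + 1) f u * ep a (f ∘ ⇑u⁻¹) (u x) := by
  rcases h with h | h
  · exact sg_flp h u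
  · have h' : flp a f x x = a := by simp [flp_same, h]
    have := sg_flp h' u
    rw [flp_flp (Or.inr h), ep_flp_le le_rfl, ← flp_comp, ep_flp_le le_rfl] at this
    have h1 : ∀ v : ℤˣ, v * v = 1 := by simp
    calc _ = ep a f x * (sg (a + 1) (flp a f x) u * ep a (f ∘ ⇑u⁻¹) (u x)) * ep a (f ∘ ⇑u⁻¹) (u x) := by
            rw [mul_assoc, mul_assoc, h1, mul_one]
      _ = _ := by rw [← this, ← mul_assoc, h1, one_mul]

def DD (a : ℕ) : Wm k n (a + 1) →ₗ[k] Wm k n (a + 1) :=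
  wlift k fun f => ∑ x, if f x = a ∨ f x = a + 1 then us k (ep a f x) • ee k (flp a f x) else 0

lemma DD_ee (a : ℕ) (f : Fin n → ℕ) : DD k a (ee k f : Wm k n (a+1)) =
    ∑ x, if f x = a ∨ f x = a + 1 then us k (ep a f x) • ee k (flp a f x) else 0 := by
  simp [DD]

lemma DD_rho (a : ℕ) (u : Perm (Fin n)) :
    DD k a ∘ₗ rho k n (a + 1) u = rho k n (a + 1) u ∘ₗ DD k a := wext fun f => by
  simp only [LinearMap.comp_apply, rho_ee, DD_ee, map_smul, map_sum, Finset.smul_sum]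
  rw [← Equiv.sum_comp u]
  refine Finset.sum_congr rfl fun x _ => ?_
  by_cases h : f x = a ∨ f x = a + 1
  · rw [if_pos (by simpa using h), if_pos h, map_smul, rho_ee, smul_smul, smul_smul, ← us_mul,
      ← us_mul, sg_flp' h, flp_comp]
  · rw [if_neg (by simpa using h), if_neg h, smul_zero, map_zero]

lemma sum_split {V : Type*} [AddCommGroup V] (q : Fin n → Fin n → V) :
    ∑ x, ∑ y, q x y = (∑ x, q x x) + ∑ x, ∑ y, if x < y then q x y + q y x else 0 := by
  have h1 : ∑ x, ∑ y, q x y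
      = (∑ x, ∑ y, if x = y then q x y else 0) +
      ((∑ x, ∑ y, if x < y then q x y else 0) + ∑ x, ∑ y, if y < x then q x y else 0) := by
    simp only [← Finset.sum_add_distrib]
    refine Finset.sum_congr rfl fun x _ => Finset.sum_congr rfl fun y _ => ?_
    rcases lt_trichotomy x y with h | h | h
    · simp [h, h.not_gt, h.ne]
    · subst h; simp 
    · simp [h, h.not_gt, h.ne']
  have h2 : (∑ x : Fin n, ∑ y : Fin n, if y < x then q x y else 0)
      = ∑ x, ∑ y, if x < y then q y x else 0 := Finset.sum_comm
  rw [h1, h2]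
  congr 1
  · simp
  simp only [← Finset.sum_add_distrib]
  refine Finset.sum_congr rfl fun x _ => Finset.sum_congr rfl fun y _ => ?_
  split_ifs <;> simp

lemma DD_DD (a : ℕ) (f : Fin n → ℕ) :
    DD k a (DD k a (ee k f : Wm k n (a+1)))
      = ((Finset.univ.filter fun x => f x = a ∨ f x = a + 1).card : k) • ee k f := by
  have key : DD k a (DD k a (ee k f : Wm k n (a+1))) = ∑ x, ∑ y,
      if (f x = a ∨ f x = a + 1) ∧ (f y = a ∨ f y = a + 1) then
        (us k (ep a f x) * us k (ep a (flp a f x) y)) • (ee k (flp a (flp a f x) y) : Wm k n (a+1))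
      else 0 := by
    rw [DD_ee, map_sum]
    refine Finset.sum_congr rfl fun x _ => ?_
    by_cases h : f x = a ∨ f x = a + 1
    · rw [if_pos h, map_smul, DD_ee, Finset.smul_sum]
      refine Finset.sum_congr rfl fun y _ => ?_
      simp only [flp_in h, h, true_and, smul_ite, smul_zero, smul_smul]
    · simp [h]
  rw [key, sum_split]
  have h2 : ∀ x y : Fin n, (if x < y then
      (if (f x = a ∨ f x = a + 1) ∧ (f y = a ∨ f y = a + 1) then
        (us k (ep a f x) * us k (ep a (flp a f x) y)) • (ee k (flp a (flp a f x) y) : Wm k n (a+1))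
      else 0) + (if (f y = a ∨ f y = a + 1) ∧ (f x = a ∨ f x = a + 1) then
        (us k (ep a f y) * us k (ep a (flp a f y) x)) • (ee k (flp a (flp a f y) x) : Wm k n (a+1))
      else 0) else 0) = 0 := by
    intro x y
    split_ifs with h1 h2 h3 h3
    · rw [ep_flp_gt h1 h2.1, ep_flp_le h1.le, flp_comm h1.ne, ← add_smul, us_neg]
      rw [mul_neg, mul_comm, neg_add_cancel, zero_smul]
    · exact absurd h2.symm h3
    · exact absurd h3.symm h2
    · simp
    · rfl
  simp only [h2, Finset.sum_const_zero, add_zero, and_self]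
  have h3 : ∀ x : Fin n, (if f x = a ∨ f x = a + 1 then
      (us k (ep a f x) * us k (ep a (flp a f x) x)) • (ee k (flp a (flp a f x) x) : Wm k n (a+1))
      else 0) = if f x = a ∨ f x = a + 1 then ee k f else 0 := by
    intro x
    split_ifs with h
    · rw [flp_flp h, ep_flp_le le_rfl, us_mul_self, one_smul]
    · rfl
  simp only [h3]
  rw [← Finset.sum_filter, Finset.sum_const, Nat.cast_smul_eq_nsmul]

end model
/-! submodules of the colouring model -/
section modelsub
open Equiv (Perm)
universe u
variable (k : Type u) [Field k] {n : ℕ} (s : ℕ)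

def fc (f : Fin n → ℕ) (j : ℕ) : ℕ := (Finset.univ.filter fun x => f x = j).card

lemma fc_comp (f : Fin n → ℕ) (u : Perm (Fin n)) : fc (f ∘ ⇑u) = fc f := by
  ext j
  unfold fc
  exact Finset.card_equiv u (by simp)

def WOk (n : ℕ) (P : (ℕ → ℕ) → Prop) : Submodule k (Wm k n s) :=
  Finsupp.supported k k {f : Fin n → ℕ | P (fc f)}

lemma WOk_eq (P : (ℕ → ℕ) → Prop) : WOk k s n P =
    Submodule.span k ((fun f => (ee k f : Wm k n s)) '' {f : Fin n → ℕ | P (fc f)}) :=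
  Finsupp.supported_eq_span_single k _

lemma ee_mem_WOk {P : (ℕ → ℕ) → Prop} {f : Fin n → ℕ} (h : P (fc f)) :
    (ee k f : Wm k n s) ∈ WOk k s n P := by
  rw [WOk_eq]; exact Submodule.subset_span ⟨f, h, rfl⟩

lemma map_WOk {P : (ℕ → ℕ) → Prop} {V : Type*} [AddCommGroup V] [Module k V]
    (g : Wm k n s →ₗ[k] V) (N : Submodule k V)
    (h : ∀ f, P (fc f) → g (ee k f) ∈ N) : ∀ w ∈ WOk k s n P, g w ∈ N := by
  rw [WOk_eq]
  change _ ≤ N.comap g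
  rw [Submodule.span_le]
  rintro _ ⟨f, hf, rfl⟩
  exact h f hf

lemma eqOn_WOk {P : (ℕ → ℕ) → Prop} {V : Type*} [AddCommGroup V] [Module k V]
    (g g' : Wm k n s →ₗ[k] V)
    (h : ∀ f, P (fc f) → g (ee k f) = g' (ee k f)) : ∀ w ∈ WOk k s n P, g w = g' w := by
  intro w hw
  have := map_WOk k s (g - g') ⊥ (fun f hf => by simp [h f hf]) w hw
  simpa [sub_eq_zero] using this

lemma rho_WOk {P : (ℕ → ℕ) → Prop} (u : Perm (Fin n)) :
    ∀ w ∈ WOk k s n P, rho k n s u w ∈ WOk k s n P := by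
  refine map_WOk k s _ _ fun f hf => ?_
  rw [rho_ee]
  refine Submodule.smul_mem _ _ (ee_mem_WOk k s ?_)
  rwa [fc_comp]

def WO (n : ℕ) (P : (ℕ → ℕ) → Prop) : Submodule (GA k n) (Wm k n s) where
  carrier := WOk k s n P
  add_mem' := fun ha hb => (WOk k s n P).add_mem ha hb
  zero_mem' := (WOk k s n P).zero_mem
  smul_mem' := by
    intro a w hw
    induction a using MonoidAlgebra.induction_linear with
    | zero => rw [zero_smul]; exact (WOk k s n P).zero_mem
    | add x y hx hy => rw [add_smul]; exact (WOk k s n P).add_mem hx hy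
    | single g c =>
      rw [single_smul_w]; exact (WOk k s n P).smul_mem _ (rho_WOk k s g w hw)

lemma mem_WO {P : (ℕ → ℕ) → Prop} {w : Wm k n s} : w ∈ WO k s n P ↔ w ∈ WOk k s n P := Iff.rfl

lemma cls_WO_congr {P Q : (ℕ → ℕ) → Prop} (h : ∀ f : Fin n → ℕ, P (fc f) ↔ Q (fc f)) :
    cls (GA k n) (WO k s n P) = cls (GA k n) (WO k s n Q) := by
  have : WO k s n P = WO k s n Q := by
    ext w
    rw [mem_WO, mem_WO]
    unfold WOk
    simp [h]
  rw [this]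

lemma cls_WO_or {P Q : (ℕ → ℕ) → Prop} (h : ∀ c, P c → Q c → False) :
    cls (GA k n) (WO k s n (fun c => P c ∨ Q c))
      = cls (GA k n) (WO k s n P) + cls (GA k n) (WO k s n Q) := by
  rw [← cls_prod]
  symm
  let g : (WO k s n P × WO k s n Q) →ₗ[GA k n] Wm k n s :=
    LinearMap.coprod (WO k s n P).subtype (WO k s n Q).subtype
  have hk : WOk k s n (fun c => P c ∨ Q c) = WOk k s n P ⊔ WOk k s n Q := 
    Finsupp.supported_union {f : Fin n → ℕ | P (fc f)} {f : Fin n → ℕ | Q (fc f)}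
  have hd : Disjoint (WOk k s n P) (WOk k s n Q) := 
    (Finsupp.disjoint_supported_supported_iff (R := k) (M := k)).2 
      (Set.disjoint_left.2 fun f h1 h2 => h _ h1 h2)
  have hinj : Function.Injective g := by
    rw [injective_iff_map_eq_zero]
    rintro ⟨⟨x, hx⟩, ⟨y, hy⟩⟩ h0
    have h0 : x + y = 0 := h0
    have hxy : x = - y := eq_neg_of_add_eq_zero_left h0
    have hx0 : x = 0 := by
      have := Submodule.disjoint_def.1 hd x hx (by rw [hxy]; exact (WOk k s n Q).neg_mem hy)
      exact this
    have hy0 : y = 0 := by simpa [hx0] using h0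
    subst hx0 hy0; rfl
  have hr : LinearMap.range g = WO k s n (fun c => P c ∨ Q c) := by
    ext w
    rw [mem_WO, hk, Submodule.mem_sup]
    constructor
    · rintro ⟨⟨⟨x, hx⟩, ⟨y, hy⟩⟩, rfl⟩
      exact ⟨x, hx, y, hy, rfl⟩
    · rintro ⟨x, hx, y, hy, rfl⟩
      exact ⟨⟨⟨x, hx⟩, ⟨y, hy⟩⟩, rfl⟩
  exact cls_eq_iff.2 ⟨(LinearEquiv.ofInjective g hinj).trans (LinearEquiv.ofEq _ _ hr)⟩

lemma cls_WO_sum (S : Finset ℕ) (P : ℕ → (ℕ → ℕ) → Prop)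
    (h : ∀ i j c, P i c → P j c → i = j) :
    cls (GA k n) (WO k s n (fun c => ∃ i ∈ S, P i c))
      = ∑ i ∈ S, cls (GA k n) (WO k s n (P i)) := by
  classical
  induction S using Finset.induction_on with
  | empty =>
    rw [Finset.sum_empty]
    have : Subsingleton (WO k s n (fun c => ∃ i ∈ (∅ : Finset ℕ), P i c)) := by
      refine ⟨?_⟩
      have h0 : ∀ w ∈ WO k s n (fun c => ∃ i ∈ (∅ : Finset ℕ), P i c), w = 0 := fun w hw =>
        eqOn_WOk k s (P := fun c => ∃ i ∈ (∅ : Finset ℕ), P i c) LinearMap.id 0 (by simp) w hw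
      rintro ⟨x, hx⟩ ⟨y, hy⟩
      simp [h0 x hx, h0 y hy]
    exact cls_zero _
  | insert i S hi ih =>
    rw [Finset.sum_insert hi, ← ih, ← cls_WO_or]
    · refine cls_WO_congr k s fun f => ?_
      simp
    · rintro c h1 ⟨j, hj, h2⟩
      exact hi (h _ _ _ h1 h2 ▸ hj)

/-! Koszul -/
def Pt (a m : ℕ) (γ : ℕ → ℕ) (t : ℕ) (c : ℕ → ℕ) : Prop :=
  (∀ j, j ≠ a → j ≠ a + 1 → c j = γ j) ∧ c a + c (a + 1) = m ∧ c a % 2 = t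

lemma fc_flp_ne {a : ℕ} {f : Fin n → ℕ} {x : Fin n} (h : f x = a ∨ f x = a + 1) (j : ℕ)
    (h1 : j ≠ a) (h2 : j ≠ a + 1) : fc (flp a f x) j = fc f j := by
  unfold fc
  congr 1
  ext y
  by_cases hy : y = x
  · subst hy; simp only [Finset.mem_filter, Finset.mem_univ, true_and, flp_same]
    rcases h with h | h <;> simp [h] <;> omega
  · simp [flp_ne hy]

lemma fc_flp_a {a : ℕ} {f : Fin n → ℕ} {x : Fin n} (h : f x = a) :
    fc (flp a f x) a + 1 = fc f a ∧ fc (flp a f x) (a + 1) = fc f (a + 1) + 1 := by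
  unfold fc
  constructor
  · have : (Finset.univ.filter fun y => f y = a) =
      insert x (Finset.univ.filter fun y => flp a f x y = a) := by
      ext y
      by_cases hy : y = x
      · subst hy; simp [h]
      · simp [flp_ne hy, hy]
    rw [this, Finset.card_insert_of_notMem]
    simp [flp_same, h]
  · have : (Finset.univ.filter fun y => flp a f x y = a + 1) =
      insert x (Finset.univ.filter fun y => f y = a + 1) := by
      ext y
      by_cases hy : y = x
      · subst hy; simp [h, flp_same]
      · simp [flp_ne hy, hy]
    rw [this, Finset.card_insert_of_notMem]
    simp [h]

lemma Pt_flp {a m : ℕ} {γ : ℕ → ℕ} {t : ℕ} {f : Fin n → ℕ} {x : Fin n}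
    (h : f x = a ∨ f x = a + 1) (hf : Pt a m γ t (fc f)) :
    Pt a m γ (1 - t) (fc (flp a f x)) := by
  obtain ⟨h1, h2, h3⟩ := hf
  refine ⟨fun j hj hj' => by rw [fc_flp_ne h j hj hj']; exact h1 j hj hj', ?_⟩
  rcases h with h | h
  · have := fc_flp_a h
    omega
  · have h' : flp a f x x = a := by simp [flp_same, h]
    have := fc_flp_a h'
    rw [flp_flp (Or.inr h)] at this
    omega

lemma fc_add (a : ℕ) (f : Fin n → ℕ) :
    (Finset.univ.filter fun x => f x = a ∨ f x = a + 1).card = fc f a + fc f (a + 1) := by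
  unfold fc
  rw [Finset.filter_or, Finset.card_union_of_disjoint]
  rw [Finset.disjoint_filter]
  intro x _ h; omega

lemma DD_WO {a m : ℕ} {γ : ℕ → ℕ} {t : ℕ} : ∀ w ∈ WO k (a+1) n (Pt a m γ t),
    DD k a w ∈ WO k (a+1) n (Pt a m γ (1 - t)) := by
  refine map_WOk k (a+1) (DD k a) (WOk k (a+1) n (Pt a m γ (1 - t))) fun f hf => ?_
  rw [DD_ee]
  refine Submodule.sum_mem _ fun x _ => ?_
  split_ifs with h
  · exact Submodule.smul_mem _ _ (ee_mem_WOk k _ (Pt_flp h hf))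
  · exact Submodule.zero_mem _

lemma DD_DD_WO {a m : ℕ} {γ : ℕ → ℕ} {t : ℕ} : ∀ w ∈ WO k (a+1) n (Pt a m γ t),
    DD k a (DD k a w) = (m : k) • w := by
  refine eqOn_WOk k (a+1) (DD k a ∘ₗ DD k a) ((m : k) • LinearMap.id) fun f hf => ?_
  rw [LinearMap.comp_apply, DD_DD, fc_add, hf.2.1]; rfl

def DG (a : ℕ) : Wm k n (a+1) →ₗ[GA k n] Wm k n (a+1) :=
  mkGA k (DD k a) (fun u v => by
    rw [single_smul_w, single_smul_w, one_smul, one_smul]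
    exact LinearMap.congr_fun (DD_rho k a u) v)

lemma koszul_WO {a m : ℕ} (γ : ℕ → ℕ) (hm : (m : k) ≠ 0) :
    cls (GA k n) (WO k (a+1) n (Pt a m γ 0)) = cls (GA k n) (WO k (a+1) n (Pt a m γ 1)) := by
  refine cls_eq_iff.2 ⟨LinearEquiv.ofBijective
    ((DG k a).restrict (p := WO k (a+1) n (Pt a m γ 0)) (q := WO k (a+1) n (Pt a m γ 1))
      (fun w hw => DD_WO k w hw)) ⟨?_, ?_⟩⟩
  · rw [injective_iff_map_eq_zero]
    rintro ⟨w, hw⟩ h0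
    have h0 : DD k a w = 0 := congrArg Subtype.val h0
    have := DD_DD_WO k w hw
    rw [h0, map_zero] at this
    have : w = 0 := (smul_eq_zero.1 this.symm).resolve_left hm
    subst this; rfl
  · rintro ⟨w, hw⟩
    have hw' : (m : k)⁻¹ • w ∈ WO k (a+1) n (Pt a m γ 1) := (WOk k (a+1) n _).smul_mem _ hw
    refine ⟨⟨DD k a ((m : k)⁻¹ • w), DD_WO k _ hw'⟩, Subtype.ext ?_⟩
    change DD k a (DD k a ((m : k)⁻¹ • w)) = w
    rw [DD_DD_WO k _ hw', smul_smul, mul_inv_cancel₀ hm, one_smul]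

/-- exact colour counts -/
def Pe (γ : ℕ → ℕ) (c : ℕ → ℕ) : Prop := ∀ j, c j = γ j

lemma koszul_cls {a m : ℕ} (γ : ℕ → ℕ) (hm : (m : k) ≠ 0) :
    ∑ i ∈ (Finset.range (m + 1)).filter (fun i => i % 2 = 0), cls (GA k n) (WO k (a+1) n
        (Pe (fun j => if j = a then i else if j = a + 1 then m - i else γ j)))
    = ∑ i ∈ (Finset.range (m + 1)).filter (fun i => i % 2 = 1), cls (GA k n) (WO k (a+1) n
        (Pe (fun j => if j = a then i else if j = a + 1 then m - i else γ j))) := by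
  have key : ∀ t, ∑ i ∈ (Finset.range (m + 1)).filter (fun i => i % 2 = t), cls (GA k n) (WO k (a+1) n
        (Pe (fun j => if j = a then i else if j = a + 1 then m - i else γ j)))
      = cls (GA k n) (WO k (a+1) n (Pt a m γ t)) := by
    intro t
    rw [← cls_WO_sum]
    · refine cls_WO_congr k _ fun f => ?_
      generalize fc f = c
      constructor
      · rintro ⟨i, hi, h⟩
        simp only [Finset.mem_filter, Finset.mem_range] at hi
        have h1 := h a
        have h2 := h (a + 1)
        simp at h1 h2
        refine ⟨fun j hj hj' => by simpa [hj, hj'] using h j, by omega, by omega⟩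
      · rintro ⟨h1, h2, h3⟩
        refine ⟨c a, by simp only [Finset.mem_filter, Finset.mem_range]; omega, fun j => ?_⟩
        dsimp only
        split_ifs with h4 h5
        · rw [h4]
        · rw [h5]; omega
        · exact h1 j h4 h5
    · intro i j c h1 h2
      have h1 := h1 a
      have h2 := h2 a
      simp at h1 h2
      omega
  rw [key, key, koszul_WO k γ hm]

end modelsub
section blocks
open Equiv (Perm)

lemma blockIdx_cons (a : ℕ) (γ : List ℕ) (x : ℕ) :
    blockIdx (a :: γ) x = if x < a then 0 else blockIdx γ (x - a) + 1 := by
  unfold blockIdx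
  rw [List.length_cons, List.range_succ_eq_map, List.countP_cons, List.countP_map]
  by_cases h : x < a
  · rw [if_pos h, if_neg (by simp; omega), add_zero, List.countP_eq_zero]
    intro j _
    have : ((a :: γ).take (j.succ + 1)).sum = a + (γ.take (j + 1)).sum := by simp
    simp only [Function.comp_apply, this, decide_eq_true_eq]; omega
  · rw [if_neg h, if_pos (by simp; omega)]
    congr 1
    refine List.countP_congr fun j _ => ?_
    have : ((a :: γ).take (j.succ + 1)).sum = a + (γ.take (j + 1)).sum := by simp
    simp only [Function.comp_apply, this, decide_eq_true_eq]; omega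

lemma blockIdx_mono (γ : List ℕ) {x y : ℕ} (h : x ≤ y) : blockIdx γ x ≤ blockIdx γ y := by
  unfold blockIdx
  refine List.countP_mono_left fun j _ hj => ?_
  simp at hj ⊢; omega

lemma blockIdx_lt (γ : List ℕ) {x : ℕ} (h : x < γ.sum) : blockIdx γ x < γ.length := by
  induction γ generalizing x with
  | nil => simp at h
  | cons a γ ih =>
    rw [blockIdx_cons]
    simp at h
    split_ifs with h1
    · simp
    · simp; exact ih (by omega)

lemma card_blockIdx (γ : List ℕ) (j : ℕ) :
    ∑ x ∈ Finset.range γ.sum, (if blockIdx γ x = j then 1 else 0) = γ.getD j 0 := by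
  induction γ generalizing j with
  | nil => simp
  | cons a γ ih =>
    rw [List.sum_cons, Finset.sum_range_add]
    have h1 : ∀ x ∈ Finset.range a, (if blockIdx (a :: γ) x = j then 1 else 0)
      = if j = 0 then 1 else 0 := by
      intro x hx
      have hx : x < a := by simpa using hx
      simp [blockIdx_cons, hx, eq_comm]
    have h2 : ∀ x ∈ Finset.range γ.sum, (if blockIdx (a :: γ) (a + x) = j then 1 else 0)
      = if blockIdx γ x + 1 = j then 1 else 0 := by
      intro x hx
      simp [blockIdx_cons]
    rw [Finset.sum_congr rfl h1, Finset.sum_congr rfl h2]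
    cases j with
    | zero => simp
    | succ j => simpa using ih j

def f0 (n : ℕ) (γ : List ℕ) (x : Fin n) : ℕ := blockIdx γ x

lemma fc_f0 {n : ℕ} {γ : List ℕ} (h : γ.sum = n) (j : ℕ) : fc (f0 n γ) j = γ.getD j 0 := by
  subst h
  rw [← card_blockIdx]
  unfold fc f0
  rw [Finset.card_filter, ← Fin.sum_univ_eq_sum_range (fun x => if blockIdx γ x = j then 1 else 0)]

lemma f0_young {n : ℕ} {γ : List ℕ} (σ : youngSubgroup n γ) (x : Fin n) :
    f0 n γ ((σ : Perm (Fin n)) x) = f0 n γ x := σ.2 x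

/-- the part of σ on the blocks in Q -/
def pc {n : ℕ} {γ : List ℕ} (Q : ℕ → Prop) [DecidablePred Q] (σ : youngSubgroup n γ) : Perm (Fin n) :=
  Perm.ofSubtype (p := fun x => Q (f0 n γ x)) (Perm.subtypePerm (σ : Perm (Fin n)) (fun x => by
    rw [f0_young σ x]))

lemma pc_apply {n : ℕ} {γ : List ℕ} (Q : ℕ → Prop) [DecidablePred Q] (σ : youngSubgroup n γ)
    (x : Fin n) : pc Q σ x = if Q (f0 n γ x) then (σ : Perm (Fin n)) x else x := by
  split_ifs with h
  · unfold pc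
    exact Perm.ofSubtype_apply_of_mem (p := fun x => Q (f0 n γ x)) _ h
  · exact Perm.ofSubtype_apply_of_not_mem _ h

lemma sign_pc_finset {n : ℕ} {γ : List ℕ} (S : Finset ℕ) (σ : youngSubgroup n γ) :
    ∏ j ∈ S, Perm.sign (blockRestrict n γ j σ) = Perm.sign (pc (· ∈ S) σ) := by
  induction S using Finset.induction_on with
  | empty =>
    have : pc (· ∈ (∅ : Finset ℕ)) σ = 1 := by ext x; rw [pc_apply]; simp
    rw [this]; simp
  | insert j S hj ih =>
    rw [Finset.prod_insert hj, ih]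
    have h1 : Perm.sign (blockRestrict n γ j σ) = Perm.sign (pc (· = j) σ) :=
      (Perm.sign_ofSubtype (blockRestrict n γ j σ)).symm
    rw [h1, ← map_mul]
    congr 1
    ext x
    rw [Perm.mul_apply, pc_apply (· ∈ S), pc_apply (· ∈ insert j S)]
    by_cases hx : f0 n γ x ∈ S
    · have : f0 n γ x ≠ j := fun h => hj (h ▸ hx)
      rw [if_pos hx, pc_apply, f0_young, if_neg this, if_pos (Finset.mem_insert_of_mem hx)]
    · rw [if_neg hx, pc_apply]
      simp [hx]

lemma pc_congr {n : ℕ} {γ : List ℕ} (Q Q' : ℕ → Prop) [DecidablePred Q] [DecidablePred Q']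
    (σ : youngSubgroup n γ) (h : ∀ x : Fin n, Q (f0 n γ x) ↔ Q' (f0 n γ x)) : pc Q σ = pc Q' σ := by
  ext x; rw [pc_apply, pc_apply]; simp [h]

variable (k : Type*) [Field k]

lemma chi_eq {n : ℕ} {α β : List ℕ} (h : (α ++ β).sum = n) (σ : youngSubgroup n (α ++ β)) :
    chiHom k n α β σ = us k (Perm.sign (pc (α.length ≤ ·) σ)) := by
  have h1 : chiHom k n α β σ = us k (∏ j ∈ Finset.Ico α.length (α.length + β.length),
      Perm.sign (blockRestrict n (α ++ β) j σ)) := by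
    unfold chiHom us
    rw [MonoidHom.finsetProd_apply]
    simp [blockSign]
  rw [h1, sign_pc_finset]
  congr 2
  refine pc_congr _ _ _ fun x => ?_
  have : f0 n (α ++ β) x < (α ++ β).length := blockIdx_lt _ (by rw [h]; exact x.2)
  simp at this ⊢; omega

lemma sg_f0 {n : ℕ} {γ : List ℕ} (s : ℕ) (σ : youngSubgroup n γ) :
    sg s (f0 n γ) σ = Perm.sign (pc (s ≤ ·) σ) := by
  rw [Perm.sign_eq_prod_prod_Ioi]
  unfold sg
  refine Finset.prod_congr rfl fun x _ => ?_
  rw [← Finset.prod_subset (Finset.subset_univ (Finset.Ioi x))]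
  · refine Finset.prod_congr rfl fun y hy => ?_
    have hxy : x < y := by simpa using hy
    have key : (f0 n γ x = f0 n γ y ∧ s ≤ f0 n γ x ∧ (σ : Perm (Fin n)) y < (σ : Perm (Fin n)) x) ↔
      ¬ (pc (s ≤ ·) σ x < pc (s ≤ ·) σ y) := by
      have hne : pc (s ≤ ·) σ x ≠ pc (s ≤ ·) σ y := fun h => hxy.ne ((pc (s ≤ ·) σ).injective h)
      have hf : ∀ z, f0 n γ (pc (s ≤ ·) σ z) = f0 n γ z := by
        intro z; rw [pc_apply]; split_ifs
        · exact f0_young σ z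
        · rfl
      by_cases he : f0 n γ x = f0 n γ y
      · by_cases hs : s ≤ f0 n γ x
        · have hs' : s ≤ f0 n γ y := he ▸ hs
          rw [pc_apply, pc_apply, if_pos hs, if_pos hs'] at hne ⊢
          simp only [he, hs', true_and, not_lt]
          exact ⟨le_of_lt, fun h => lt_of_le_of_ne h hne.symm⟩
        · have hs' : ¬ s ≤ f0 n γ y := he ▸ hs
          rw [pc_apply, pc_apply, if_neg hs, if_neg hs']
          simp [hs, hxy]
      · simp only [he, false_and, false_iff, not_not]
        by_contra hlt
        have h1 : f0 n γ y ≤ f0 n γ x := by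
          rw [← hf x, ← hf y]
          exact blockIdx_mono γ (by simpa using hlt)
        have h2 : f0 n γ x ≤ f0 n γ y := blockIdx_mono γ hxy.le
        omega
    simp only [hxy, true_and, key]
    split_ifs <;> rfl
  · intro y _ hy
    simp at hy
    rw [if_neg]
    simp [hy.not_gt]

end blocks
section sypm
open Equiv (Perm)
universe u
variable (k : Type u) [Field k] {n : ℕ}

lemma exists_perm_of_card {J : Type*} (g g' : Fin n → J)
    (h : ∀ j, Nat.card {x // g x = j} = Nat.card {x // g' x = j}) :
    ∃ π : Perm (Fin n), ∀ x, g' (π x) = g x := by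
  have e : ∀ j, {x // g x = j} ≃ {x // g' x = j} := fun j => Nonempty.some (Finite.card_eq.1 (h j))
  exact ⟨Equiv.ofFiberEquiv e, fun x => Equiv.ofFiberEquiv_map e x⟩

lemma card_fiber_fc (f : Fin n → ℕ) (j : ℕ) : Nat.card {x // f x = j} = fc f j := by
  rw [Nat.card_eq_fintype_card, Fintype.card_subtype]; rfl

lemma exists_perm_fc (f g : Fin n → ℕ) (h : fc f = fc g) : ∃ u : Perm (Fin n), f ∘ ⇑u⁻¹ = g := by
  obtain ⟨π, hπ⟩ := exists_perm_of_card f g (fun j => by rw [card_fiber_fc, card_fiber_fc, h])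
  refine ⟨π, ?_⟩
  ext x
  simp [← hπ]

variable {α β : List ℕ}

def phi (α β : List ℕ) : GA k n →ₗ[GA k n] Wm k n α.length :=
  LinearMap.toSpanSingleton (GA k n) _ (ee k (f0 n (α ++ β)))

lemma phi_single (u : Perm (Fin n)) (c : k) : phi k α β (MonoidAlgebra.single u c : GA k n)
    = (c * us k (sg α.length (f0 n (α ++ β)) u)) • ee k (f0 n (α ++ β) ∘ ⇑u⁻¹) := by
  unfold phi
  rw [LinearMap.toSpanSingleton_apply, single_smul_w, rho_ee, smul_smul]

lemma f0_young_inv {γ : List ℕ} (σ : youngSubgroup n γ) :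
    f0 n γ ∘ ⇑(σ : Perm (Fin n))⁻¹ = f0 n γ := by
  ext x
  exact f0_young σ⁻¹ x

lemma phi_rel (h : (α ++ β).sum = n) : relSub k n α β ≤ LinearMap.ker (phi k α β) := by
  unfold relSub
  rw [Submodule.span_le]
  rintro _ ⟨σ, rfl⟩
  rw [SetLike.mem_coe, LinearMap.mem_ker, map_sub, phi_single, phi_single, f0_young_inv, sg_one,
    chi_eq k h, sg_f0]
  simp

def phib (h : (α ++ β).sum = n) : SYPM k n α β →ₗ[GA k n] Wm k n α.length :=
  (relSub k n α β).liftQ (phi k α β) (phi_rel k h)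

lemma mk_young (h : (α ++ β).sum = n) (u : Perm (Fin n)) (σ : youngSubgroup n (α ++ β)) :
    (Submodule.Quotient.mk (MonoidAlgebra.single (u * σ) 1 : GA k n) : SYPM k n α β)
      = us k (sg α.length (f0 n (α ++ β)) σ) • 
        (Submodule.Quotient.mk (MonoidAlgebra.single u 1 : GA k n) : SYPM k n α β) := by
  rw [← Submodule.Quotient.mk_smul, Submodule.Quotient.eq]
  have h1 : (MonoidAlgebra.single (u * (σ : Perm (Fin n))) 1 : GA k n)
      - us k (sg α.length (f0 n (α ++ β)) σ) • (MonoidAlgebra.single u 1 : GA k n)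
      = (MonoidAlgebra.single u 1 : GA k n) • (MonoidAlgebra.single (σ : Perm (Fin n)) 1
            - MonoidAlgebra.single 1 (chiHom k n α β σ)) := by
    rw [smul_sub, smul_eq_mul, smul_eq_mul, MonoidAlgebra.single_mul_single,
      MonoidAlgebra.single_mul_single, chi_eq k h, sg_f0]
    simp
  rw [h1]
  exact Submodule.smul_mem _ _ (Submodule.subset_span ⟨σ, rfl⟩)

open Classical in
def psi (α β : List ℕ) : Wm k n α.length →ₗ[k] SYPM k n α β :=
  wlift k fun f => if h : ∃ u : Perm (Fin n), f0 n (α ++ β) ∘ ⇑u⁻¹ = f then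
    us k (sg α.length (f0 n (α ++ β)) h.choose) •
      (Submodule.Quotient.mk (MonoidAlgebra.single h.choose 1 : GA k n) : SYPM k n α β) else 0

lemma psi_phi (h : (α ++ β).sum = n) (u : Perm (Fin n)) :
    psi k α β (phi k α β (MonoidAlgebra.single u 1 : GA k n))
      = Submodule.Quotient.mk (MonoidAlgebra.single u 1 : GA k n) := by
  rw [phi_single, one_mul, map_smul, psi, wlift_ee]
  have hex : ∃ v : Perm (Fin n), f0 n (α ++ β) ∘ ⇑v⁻¹ = f0 n (α ++ β) ∘ ⇑u⁻¹ := ⟨u, rfl⟩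
  rw [dif_pos hex]
  have hv := hex.choose_spec
  generalize hex.choose = v at hv ⊢
  have hσ : v⁻¹ * u ∈ youngSubgroup n (α ++ β) := by
    intro x
    have := congrFun hv (u x)
    have h3 : f0 n (α ++ β) ((v⁻¹ * u) x) = f0 n (α ++ β) x := by simpa using this
    exact h3
  obtain ⟨σ, hσ'⟩ : ∃ σ : youngSubgroup n (α ++ β), (σ : Perm (Fin n)) = v⁻¹ * u := ⟨⟨_, hσ⟩, rfl⟩
  have hu : u = v * (σ : Perm (Fin n)) := by rw [hσ']; group
  rw [hu, mk_young k h, sg_mul, f0_young_inv, smul_smul, us_mul, mul_right_comm, us_mul_self, one_mul]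

lemma cls_SYPM (h : (α ++ β).sum = n) :
    cls (GA k n) (SYPM k n α β)
      = cls (GA k n) (WO k α.length n (Pe fun j => (α ++ β).getD j 0)) := by
  have hinj : Function.Injective (phib k h) := by
    have hl : Function.LeftInverse (psi k α β) (phib k h) := by
      intro w
      obtain ⟨a, rfl⟩ := Submodule.Quotient.mk_surjective _ w
      change psi k α β (phi k α β a) = _
      induction a using MonoidAlgebra.induction_linear with
      | zero => simp
      | add x y hx hy => rw [map_add, map_add, hx, hy, Submodule.Quotient.mk_add]
      | single g c =>
        have : (MonoidAlgebra.single g c : GA k n) = c • (MonoidAlgebra.single g 1 : GA k n) := by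
          simp
        have h2 : phi k α β (MonoidAlgebra.single g c : GA k n)
          = c • phi k α β (MonoidAlgebra.single g 1 : GA k n) := by
          rw [phi_single, phi_single, smul_smul, one_mul]
        rw [h2, map_smul, psi_phi k h, ← Submodule.Quotient.mk_smul, ← this]
    exact hl.injective
  have hr : LinearMap.range (phib k h) = WO k α.length n (Pe fun j => (α ++ β).getD j 0) := by
    apply le_antisymm
    · rintro _ ⟨w, rfl⟩
      obtain ⟨a, rfl⟩ := Submodule.Quotient.mk_surjective _ w
      change a • ee k (f0 n (α ++ β)) ∈ _
      refine Submodule.smul_mem _ _ (ee_mem_WOk k _ ?_)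
      exact fc_f0 h
    · refine map_WOk k α.length LinearMap.id ((LinearMap.range (phib k h)).restrictScalars k) ?_
      intro f hf
      obtain ⟨u, hu⟩ := exists_perm_fc (f0 n (α ++ β)) f (by
        ext j; rw [fc_f0 h, hf j])
      refine ⟨Submodule.Quotient.mk
        (MonoidAlgebra.single u (us k (sg α.length (f0 n (α ++ β)) u)) : GA k n), ?_⟩
      change phi k α β _ = _
      rw [phi_single, us_mul_self, one_smul, hu]; rfl
  exact cls_eq_iff.2 ⟨(LinearEquiv.ofInjective _ hinj).trans (LinearEquiv.ofEq _ _ hr)⟩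

/-! conjugation invariance -/

def Compat (α β α' β' : List ℕ) (π : Perm (Fin n)) : Prop :=
  (∀ x y, f0 n (α ++ β) x = f0 n (α ++ β) y ↔ f0 n (α' ++ β') (π x) = f0 n (α' ++ β') (π y)) ∧
  ∀ x, α.length ≤ f0 n (α ++ β) x ↔ α'.length ≤ f0 n (α' ++ β') (π x)

variable {α' β' : List ℕ}

lemma Compat.symm {π : Perm (Fin n)} (h : Compat α β α' β' π) : Compat α' β' α β π⁻¹ :=
  ⟨fun x y => by rw [h.1]; simp, fun x => by rw [h.2]; simp⟩

def cj (π : Perm (Fin n)) : GA k n →ₗ[GA k n] GA k n :=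
  LinearMap.toSpanSingleton (GA k n) _ (MonoidAlgebra.single π⁻¹ 1)

lemma cj_rel (h : (α ++ β).sum = n) (h' : (α' ++ β').sum = n) {π : Perm (Fin n)}
    (hc : Compat α β α' β' π) : relSub k n α β ≤ (relSub k n α' β').comap (cj k π) := by
  unfold relSub
  rw [Submodule.span_le]
  rintro _ ⟨σ, rfl⟩
  rw [SetLike.mem_coe, Submodule.mem_comap]
  have hτ : π * σ * π⁻¹ ∈ youngSubgroup n (α' ++ β') := by
    intro x
    have h1 := f0_young σ (π⁻¹ x)
    rw [hc.1] at h1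
    have h3 : f0 n (α' ++ β') ((π * σ * π⁻¹) x) = f0 n (α' ++ β') x := by simpa using h1
    exact h3
  obtain ⟨τ, hτ'⟩ : ∃ τ : youngSubgroup n (α' ++ β'), (τ : Perm (Fin n)) = π * σ * π⁻¹ :=
    ⟨⟨_, hτ⟩, rfl⟩
  have hchi : chiHom k n α β σ = chiHom k n α' β' τ := by
    rw [chi_eq k h, chi_eq k h']
    have : pc (α'.length ≤ ·) τ = π * pc (α.length ≤ ·) σ * π⁻¹ := by
      ext x
      have hx : π (π⁻¹ x) = x := by simp
      simp only [Perm.mul_apply, pc_apply, hτ', hc.2, hx]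
      split_ifs <;> simp
    rw [this, map_mul, map_mul, map_inv, mul_right_comm, mul_inv_cancel, one_mul]
  have h1 : cj k π (MonoidAlgebra.single (σ : Perm (Fin n)) 1
            - MonoidAlgebra.single 1 (chiHom k n α β σ))
      = (MonoidAlgebra.single π⁻¹ 1 : GA k n) • (MonoidAlgebra.single (τ : Perm (Fin n)) 1
            - MonoidAlgebra.single 1 (chiHom k n α' β' τ)) := by
    unfold cj
    rw [LinearMap.toSpanSingleton_apply, smul_eq_mul, smul_eq_mul, sub_mul, mul_sub,
      MonoidAlgebra.single_mul_single, MonoidAlgebra.single_mul_single,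
      MonoidAlgebra.single_mul_single, MonoidAlgebra.single_mul_single, hτ', hchi]
    simp [mul_assoc]
  rw [h1]
  exact Submodule.smul_mem _ _ (Submodule.subset_span ⟨τ, rfl⟩)

lemma cj_cj (π : Perm (Fin n)) (a : GA k n) : cj k π⁻¹ (cj k π a) = a := by
  unfold cj
  simp [mul_assoc, MonoidAlgebra.single_mul_single, ← MonoidAlgebra.one_def]

lemma cls_compat (h : (α ++ β).sum = n) (h' : (α' ++ β').sum = n) {π : Perm (Fin n)}
    (hc : Compat α β α' β' π) :
    cls (GA k n) (SYPM k n α β) = cls (GA k n) (SYPM k n α' β') := by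
  refine cls_eq_iff.2 ⟨LinearEquiv.ofLinearMap
    (Submodule.mapQ _ _ (cj k π) (cj_rel k h h' hc))
    (Submodule.mapQ _ _ (cj k π⁻¹) (cj_rel k h' h hc.symm)) ?_ ?_⟩
  · refine LinearMap.ext fun w => ?_
    obtain ⟨a, rfl⟩ := Submodule.Quotient.mk_surjective _ w
    have := cj_cj k π⁻¹ a
    rw [inv_inv] at this
    rw [LinearMap.comp_apply, Submodule.mapQ_apply, Submodule.mapQ_apply, this]; rfl
  · refine LinearMap.ext fun w => ?_
    obtain ⟨a, rfl⟩ := Submodule.Quotient.mk_surjective _ w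
    rw [LinearMap.comp_apply, Submodule.mapQ_apply, Submodule.mapQ_apply, cj_cj]; rfl

/-! counting blocks -/

lemma finite_getD (l : List ℕ) {v : ℕ} (hv : v ≠ 0) : {j | l.getD j 0 = v}.Finite := by
  refine (Set.finite_Iio l.length).subset fun j hj => ?_
  by_contra h
  simp only [Set.mem_Iio, not_lt] at h
  simp only [Set.mem_ofPred_eq, List.getD_eq_default _ _ h] at hj
  exact hv hj.symm

lemma ncard_getD (l : List ℕ) {v : ℕ} (hv : v ≠ 0) : {j | l.getD j 0 = v}.ncard = l.count v := by
  induction l with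
  | nil => simp [hv.symm]
  | cons a l ih =>
    have hs : (Nat.succ '' {j | l.getD j 0 = v}).ncard = l.count v := by
      rw [Set.ncard_image_of_injective _ Nat.succ_injective, ih]
    by_cases ha : a = v
    · have : {j | (a :: l).getD j 0 = v} = insert 0 (Nat.succ '' {j | l.getD j 0 = v}) := by
        ext j; cases j <;> simp [ha]
      rw [this, Set.ncard_insert_of_notMem (by simp) ((finite_getD l hv).image _), hs]
      simp [ha]
    · have : {j | (a :: l).getD j 0 = v} = Nat.succ '' {j | l.getD j 0 = v} := by
        ext j; cases j <;> simp [ha]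
      rw [this, hs, List.count_cons_of_ne ha]

lemma ncard_label (α β : List ℕ) (b : Bool) {v : ℕ} (hv : v ≠ 0) :
    {j | (α ++ β).getD j 0 ≠ 0 ∧ (decide (α.length ≤ j), (α ++ β).getD j 0) = (b, v)}.ncard
      = if b then β.count v else α.count v := by
  cases b
  · rw [if_neg (by simp), ← ncard_getD α hv]
    congr 1
    ext j
    simp only [Set.mem_ofPred_eq, Prod.mk.injEq, decide_eq_false_iff_not, not_le]
    constructor
    · rintro ⟨_, h1, h2⟩
      rwa [List.getD_append _ _ _ _ h1] at h2
    · intro h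
      have h1 : j < α.length := by
        by_contra hc
        rw [List.getD_eq_default _ _ (by omega)] at h
        exact hv h.symm
      rw [List.getD_append _ _ _ _ h1]
      exact ⟨h ▸ hv, h1, h⟩
  · rw [if_pos rfl, ← ncard_getD β hv,
      ← Set.ncard_image_of_injective {j | β.getD j 0 = v} (add_right_injective α.length)]
    congr 1
    ext j
    simp only [Set.mem_ofPred_eq, Prod.mk.injEq, decide_eq_true_eq, Set.mem_image]
    constructor
    · rintro ⟨_, h1, h2⟩
      rw [List.getD_append_right _ _ _ _ h1] at h2
      exact ⟨j - α.length, h2, by omega⟩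
    · rintro ⟨i, hi, rfl⟩
      rw [List.getD_append_right _ _ _ _ (by omega), Nat.add_sub_cancel_left]
      exact ⟨hi ▸ hv, by omega, hi⟩

lemma exists_compat (h : (α ++ β).sum = n) (h' : (α' ++ β').sum = n)
    (hα : ∀ v, v ≠ 0 → α.count v = α'.count v) (hβ : ∀ v, v ≠ 0 → β.count v = β'.count v) :
    ∃ π : Perm (Fin n), Compat α β α' β' π := by
  let J := {j // (α ++ β).getD j 0 ≠ 0}
  let J' := {j // (α' ++ β').getD j 0 ≠ 0}
  let lb : J → Bool × ℕ := fun j => (decide (α.length ≤ j.1), (α ++ β).getD j 0)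
  let lb' : J' → Bool × ℕ := fun j => (decide (α'.length ≤ j.1), (α' ++ β').getD j 0)
  have hcard : ∀ c, Nat.card {j : J // lb j = c} = Nat.card {j : J' // lb' j = c} := by
    rintro ⟨b, v⟩
    have e1 : Nat.card {j : J // lb j = (b, v)} = {j | (α ++ β).getD j 0 ≠ 0 ∧
        (decide (α.length ≤ j), (α ++ β).getD j 0) = (b, v)}.ncard := by
      rw [← Nat.card_coe_set_eq]
      exact Nat.card_congr (Equiv.subtypeSubtypeEquivSubtypeInter _
        (fun j => (decide (α.length ≤ j), (α ++ β).getD j 0) = (b, v)))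
    have e2 : Nat.card {j : J' // lb' j = (b, v)} = {j | (α' ++ β').getD j 0 ≠ 0 ∧
        (decide (α'.length ≤ j), (α' ++ β').getD j 0) = (b, v)}.ncard := by
      rw [← Nat.card_coe_set_eq]
      exact Nat.card_congr (Equiv.subtypeSubtypeEquivSubtypeInter _
        (fun j => (decide (α'.length ≤ j), (α' ++ β').getD j 0) = (b, v)))
    rw [e1, e2]
    by_cases hv : v = 0
    · subst hv
      congr 1
      ext j
      simp only [Set.mem_ofPred_eq, Prod.mk.injEq]
      tauto
    · rw [ncard_label _ _ _ hv, ncard_label _ _ _ hv, hα v hv, hβ v hv]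
  have hfin : ∀ γ : List ℕ, Finite {j // γ.getD j 0 ≠ 0} := fun γ => by
    refine Set.Finite.to_subtype ((Set.finite_Iio γ.length).subset fun j hj => ?_)
    by_contra hc
    simp only [Set.mem_Iio, not_lt] at hc
    exact hj (List.getD_eq_default _ _ hc)
  have := hfin (α ++ β)
  have := hfin (α' ++ β')
  let ef : ∀ c, {j : J // lb j = c} ≃ {j : J' // lb' j = c} := fun c => Nonempty.some (Finite.card_eq.1 (hcard c))
  let e : J ≃ J' := Equiv.ofFiberEquiv ef
  have he : ∀ j, lb' (e j) = lb j := fun j => Equiv.ofFiberEquiv_map ef j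
  have hne : ∀ {γ : List ℕ}, γ.sum = n → ∀ x : Fin n, γ.getD (f0 n γ x) 0 ≠ 0 := by
    intro γ hγ x
    rw [← fc_f0 hγ]
    unfold fc
    exact Finset.card_ne_zero_of_mem (a := x) (by simp)
  let g : Fin n → J' := fun x => e ⟨f0 n (α ++ β) x, hne h x⟩
  let g' : Fin n → J' := fun x => ⟨f0 n (α' ++ β') x, hne h' x⟩
  obtain ⟨π, hπ⟩ := exists_perm_of_card g g' (by
    intro j
    have c1 : Nat.card {x // g x = j} = Nat.card {x // f0 n (α ++ β) x = (e.symm j).1} := by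
      refine Nat.card_congr (Equiv.subtypeEquivRight fun x => ?_)
      change e _ = j ↔ _
      rw [← Equiv.eq_symm_apply, Subtype.ext_iff]
    have c2 : Nat.card {x // g' x = j} = Nat.card {x // f0 n (α' ++ β') x = j.1} := by
      refine Nat.card_congr (Equiv.subtypeEquivRight fun x => ?_)
      exact Subtype.ext_iff
    rw [c1, c2, card_fiber_fc, card_fiber_fc, fc_f0 h, fc_f0 h']
    have := he (e.symm j)
    rw [Equiv.apply_symm_apply] at this
    exact (congrArg Prod.snd this).symm)
  refine ⟨π, fun x y => ?_, fun x => ?_⟩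
  · have h1 : g' (π x) = g' (π y) ↔ f0 n (α' ++ β') (π x) = f0 n (α' ++ β') (π y) := Subtype.ext_iff
    rw [← h1, hπ, hπ]
    change _ ↔ e _ = e _
    rw [e.apply_eq_iff_eq, Subtype.ext_iff]
  · have h1 := congrArg Prod.fst (he ⟨f0 n (α ++ β) x, hne h x⟩)
    have h2 : e ⟨f0 n (α ++ β) x, hne h x⟩ = g' (π x) := (hπ x).symm
    rw [h2] at h1
    have h3 : decide (α'.length ≤ f0 n (α' ++ β') (π x)) = decide (α.length ≤ f0 n (α ++ β) x) := h1
    simpa using (decide_eq_decide.1 h3).symm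

lemma cls_count (h : α.sum + β.sum = n) (h' : α'.sum + β'.sum = n)
    (hα : ∀ v, v ≠ 0 → α.count v = α'.count v) (hβ : ∀ v, v ≠ 0 → β.count v = β'.count v) :
    cls (GA k n) (SYPM k n α β) = cls (GA k n) (SYPM k n α' β') := by
  rw [← List.sum_append] at h h'
  obtain ⟨π, hπ⟩ := exists_compat h h' hα hβ
  exact cls_compat k h h' hπ

lemma cls_koszul {m : ℕ} (h : α.sum + m + β.sum = n) (hm : (m : k) ≠ 0) :
    ∑ i ∈ (Finset.range (m + 1)).filter (fun i => i % 2 = 0),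
      cls (GA k n) (SYPM k n (α ++ [i]) ((m - i) :: β))
    = ∑ i ∈ (Finset.range (m + 1)).filter (fun i => i % 2 = 1),
      cls (GA k n) (SYPM k n (α ++ [i]) ((m - i) :: β)) := by
  have key : ∀ i ∈ Finset.range (m + 1), cls (GA k n) (SYPM k n (α ++ [i]) ((m - i) :: β))
      = cls (GA k n) (WO k (α.length + 1) n (Pe (fun j => if j = α.length then i else
          if j = α.length + 1 then m - i else (α ++ 0 :: 0 :: β).getD j 0))) := by
    intro i hi
    simp only [Finset.mem_range] at hi
    rw [cls_SYPM k (by simp; omega)]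
    have e : (α ++ [i]).length = α.length + 1 := by simp
    rw [e]
    refine cls_WO_congr k _ fun f => ?_
    unfold Pe
    refine forall_congr' fun j => ?_
    have : (α ++ [i] ++ (m - i) :: β).getD j 0 = if j = α.length then i else
          if j = α.length + 1 then m - i else (α ++ 0 :: 0 :: β).getD j 0 := by
      rw [List.append_assoc, List.singleton_append]
      by_cases hj : j < α.length
      · rw [List.getD_append _ _ _ _ hj, List.getD_append _ _ _ _ hj, if_neg (by omega),
          if_neg (by omega)]
      · rw [List.getD_append_right _ _ _ _ (by omega),
          List.getD_append_right α (0 :: 0 :: β) _ _ (by omega)]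
        obtain ⟨t, rfl⟩ : ∃ t, j = α.length + t := ⟨j - α.length, by omega⟩
        rw [Nat.add_sub_cancel_left]
        rcases t with _ | _ | t
        · simp
        · simp
        · simp only [List.getD_cons_succ]
          rw [if_neg (by omega), if_neg (by omega)]
    dsimp only
    rw [this]
  have := koszul_cls k (n := n) (a := α.length) (m := m) (fun j => (α ++ 0 :: 0 :: β).getD j 0) hm
  rw [Finset.sum_congr rfl (fun i hi => key i (Finset.mem_filter.1 hi).1), this,
    Finset.sum_congr rfl (fun i hi => key i (Finset.mem_filter.1 hi).1)]

end sypm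
section comb

def par (l : List ℕ) : ℕ := (l.sum + l.length) % 2

lemma par_append (l l' : List ℕ) : par (l ++ l') = (par l + par l') % 2 := by
  simp [par]; omega

lemma par_lt (l : List ℕ) : par l < 2 := Nat.mod_lt _ (by norm_num)

def Good (p b : ℕ) (δ : List ℕ) : Prop :=
  (∀ x ∈ δ, 0 < x) ∧ (∀ j < δ.length, ¬ p ∣ (δ.take (j + 1)).sum) ∧ δ.sum ≤ b ∧ p ∣ b - δ.sum

lemma good_finite (p b : ℕ) : {δ | Good p b δ}.Finite := by
  have : (⋃ m ∈ Finset.range (b + 1),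
      Set.range (Composition.blocks : Composition m → List ℕ)).Finite := by
    refine Set.Finite.biUnion (Finset.finite_toSet _) fun m _ => Set.finite_range _
  refine this.subset ?_
  rintro δ ⟨h1, _, h3, _⟩
  simp only [Set.mem_iUnion]
  exact ⟨δ.sum, by simp; omega, ⟨δ, fun h => h1 _ h, rfl⟩, rfl⟩

def Dp (p b : ℕ) : Finset (List ℕ) := (good_finite p b).toFinset

lemma mem_Dp {p b : ℕ} {δ : List ℕ} : δ ∈ Dp p b ↔ Good p b δ := by simp [Dp]

lemma good_snoc {p b i : ℕ} {δ : List ℕ} (hb : ¬ p ∣ b) :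
    Good p b (δ ++ [i]) ↔ (1 ≤ i ∧ i ≤ b) ∧ Good p (b - i) δ := by
  have h1 : (∀ j < (δ ++ [i]).length, ¬ p ∣ ((δ ++ [i]).take (j + 1)).sum) ↔
      (∀ j < δ.length, ¬ p ∣ (δ.take (j + 1)).sum) ∧ ¬ p ∣ δ.sum + i := by
    rw [List.length_append, List.length_singleton]
    constructor
    · intro h
      refine ⟨fun j hj => ?_, ?_⟩
      · have := h j (by omega)
        rwa [List.take_append_of_le_length (by omega)] at this
      · have := h δ.length (by omega)
        rw [List.take_of_length_le (by simp)] at this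
        simpa using this
    · rintro ⟨h1, h2⟩ j hj
      by_cases hj' : j < δ.length
      · rw [List.take_append_of_le_length (by omega)]
        exact h1 j hj'
      · rw [List.take_of_length_le (by simp; omega)]
        simpa using h2
  unfold Good
  rw [h1]
  simp only [List.mem_append, List.mem_singleton, List.sum_append, List.sum_singleton]
  constructor
  · rintro ⟨h1, ⟨h2, h3⟩, h4, h5⟩
    refine ⟨⟨h1 i (Or.inr rfl), by omega⟩, fun x hx => h1 x (Or.inl hx), h2, by omega, ?_⟩
    rwa [Nat.sub_sub, add_comm i]
  · rintro ⟨⟨h1, h2⟩, h3, h4, h5, h6⟩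
    have h7 : p ∣ b - (δ.sum + i) := by rwa [Nat.sub_sub, add_comm i] at h6
    refine ⟨?_, ⟨h4, fun h => hb ?_⟩, by omega, h7⟩
    · rintro x (hx | rfl)
      · exact h3 x hx
      · omega
    · have := dvd_add h7 h
      rwa [Nat.sub_add_cancel (by omega)] at this

lemma Dp_of_dvd {p b : ℕ} (hb : p ∣ b) : Dp p b = {[]} := by
  ext δ
  rw [mem_Dp, Finset.mem_singleton]
  constructor
  · rintro ⟨_, h2, h3, h4⟩
    by_contra hne
    have hl : 0 < δ.length := List.length_pos_iff.2 hne
    have := h2 (δ.length - 1) (by omega)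
    rw [Nat.sub_add_cancel hl, List.take_length] at this
    exact this ((Nat.dvd_sub_iff_right h3 hb).1 h4)
  · rintro rfl
    exact ⟨by simp, by simp, by simp, by simpa using hb⟩

lemma sum_Dp {G : Type*} [AddCommMonoid G] {p b : ℕ} (hb : ¬ p ∣ b) (g : List ℕ → G) :
    ∑ δ ∈ Dp p b, g δ = ∑ i ∈ Finset.Icc 1 b, ∑ δ ∈ Dp p (b - i), g (δ ++ [i]) := by
  rw [Finset.sum_sigma']
  symm
  refine Finset.sum_bij (fun x _ => x.2 ++ [x.1]) ?_ ?_ ?_ ?_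
  · rintro ⟨i, δ⟩ h
    simp only [Finset.mem_sigma, Finset.mem_Icc, mem_Dp] at h ⊢
    exact (good_snoc hb).2 h
  · rintro ⟨i, δ⟩ _ ⟨j, δ'⟩ _ h
    simp only [List.append_singleton_inj] at h
    obtain ⟨rfl, rfl⟩ := h
    rfl
  · intro δ hδ
    rw [mem_Dp] at hδ
    rcases List.eq_nil_or_concat' δ with rfl | ⟨δ', i, rfl⟩
    · exact absurd (by simpa using hδ.2.2.2) hb
    · rw [good_snoc hb] at hδ
      exact ⟨⟨i, δ'⟩, by simpa [mem_Dp] using hδ, rfl⟩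
  · intros; rfl

lemma expand {G ι : Type*} [AddCommMonoid G] (I : Finset ι) (π : ι → ℕ) (hπ : ∀ i, π i < 2)
    (x : G) (y : ι → G) (X : ι → ℕ → G)
    (h : x + ∑ i ∈ I, (if π i = 1 then y i else 0) = ∑ i ∈ I, (if π i = 0 then y i else 0))
    (hi : ∀ i ∈ I, y i + X i 1 = X i 0) :
    x + ∑ i ∈ I, X i ((1 + π i) % 2) = ∑ i ∈ I, X i ((0 + π i) % 2) := by
  have h1 : ∀ i ∈ I, X i ((1 + π i) % 2) = (if π i = 1 then y i else 0) + X i 1 := by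
    intro i hI
    have := hπ i
    by_cases h : π i = 1
    · rw [h, if_pos rfl, hi i hI]
    · have h0 : π i = 0 := by omega
      rw [h0]; simp
  have h2 : ∀ i ∈ I, X i ((0 + π i) % 2) = (if π i = 0 then y i else 0) + X i 1 := by
    intro i hI
    have := hπ i
    by_cases h : π i = 1
    · rw [h]; simp
    · have h0 : π i = 0 := by omega
      rw [h0, if_pos rfl, hi i hI]
  rw [Finset.sum_congr rfl h1, Finset.sum_congr rfl h2, Finset.sum_add_distrib,
    Finset.sum_add_distrib, ← add_assoc, h]

variable {G : Type*} [AddCommMonoid G] (F : List ℕ → List ℕ → G) (n p : ℕ)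

def FP : Prop := ∀ α β α' β' : List ℕ, α.sum + β.sum = n → α'.sum + β'.sum = n →
  (∀ v, v ≠ 0 → α.count v = α'.count v) → (∀ v, v ≠ 0 → β.count v = β'.count v) →
  F α β = F α' β'

def FK : Prop := ∀ (α β : List ℕ) (m : ℕ), α.sum + m + β.sum = n → ¬ p ∣ m →
  ∑ i ∈ (Finset.range (m + 1)).filter (fun i => i % 2 = 0), F (α ++ [i]) ((m - i) :: β)
    = ∑ i ∈ (Finset.range (m + 1)).filter (fun i => i % 2 = 1), F (α ++ [i]) ((m - i) :: β)

variable {F n p}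

lemma koszul_step (hP : FP F n) (hK : FK F n p) (α β : List ℕ) (m : ℕ)
    (h : α.sum + m + β.sum = n) (hm : ¬ p ∣ m) :
    F α (m :: β) + ∑ i ∈ Finset.Icc 1 m, (if par [i] = 1 then F (α ++ [i]) ((m - i) :: β) else 0)
      = ∑ i ∈ Finset.Icc 1 m, (if par [i] = 0 then F (α ++ [i]) ((m - i) :: β) else 0) := by
  have h0 : F α (m :: β) = F (α ++ [0]) ((m - 0) :: β) := by
    refine hP _ _ _ _ (by simp; omega) (by simp; omega) ?_ (by simp)
    intro v hv
    rw [List.count_append, List.count_singleton]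
    simp [hv.symm]
  have hk := hK α β m h hm
  rw [Finset.sum_filter, Finset.sum_filter, Finset.sum_range_succ', Finset.sum_range_succ'] at hk
  have hI : ∀ g : ℕ → G, ∑ i ∈ Finset.Icc 1 m, g i = ∑ i ∈ Finset.range m, g (i + 1) := by
    intro g
    rw [Finset.range_eq_Ico, Finset.sum_Ico_add' g 0 m 1]
    rfl
  rw [hI, hI, h0, add_comm]
  simp only [Nat.zero_mod, if_true, zero_ne_one, if_false, add_zero] at hk
  have e1 : ∀ i, (par [i + 1] = 1) ↔ ((i + 1) % 2 = 0) := by intro i; simp [par]; omega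
  have e2 : ∀ i, (par [i + 1] = 0) ↔ ((i + 1) % 2 = 1) := by intro i; simp [par]; omega
  simp only [e1, e2]
  exact hk

lemma single_step (hP : FP F n) (hK : FK F n p) (b : ℕ) : ∀ (α β : List ℕ),
    α.sum + b + β.sum = n →
    F α (b :: β) + ∑ δ ∈ Dp p b, (if par δ = 1 then F (α ++ δ) ((b - δ.sum) :: β) else 0)
      = ∑ δ ∈ Dp p b, (if par δ = 0 then F (α ++ δ) ((b - δ.sum) :: β) else 0) := by
  induction b using Nat.strong_induction_on with
  | _ b ih =>
  intro α β h
  by_cases hb : p ∣ b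
  · rw [Dp_of_dvd hb]
    simp [par]
  · have hx := expand (Finset.Icc 1 b) (fun i => par [i]) (fun i => par_lt _) (F α (b :: β))
      (fun i => F (α ++ [i]) ((b - i) :: β))
      (fun i t => ∑ δ ∈ Dp p (b - i), (if par δ = t then
        F (α ++ [i] ++ δ) ((b - i - δ.sum) :: β) else 0))
      (koszul_step hP hK α β b h hb)
      (fun i hi => by
        simp only [Finset.mem_Icc] at hi
        exact ih (b - i) (by omega) (α ++ [i]) β (by simp; omega))
    have key : ∀ t < 2, ∑ δ ∈ Dp p b, (if par δ = t then F (α ++ δ) ((b - δ.sum) :: β) else 0)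
        = ∑ i ∈ Finset.Icc 1 b, ∑ δ ∈ Dp p (b - i), (if par δ = (t + par [i]) % 2 then
        F (α ++ [i] ++ δ) ((b - i - δ.sum) :: β) else 0) := by
      intro t ht
      rw [sum_Dp hb]
      refine Finset.sum_congr rfl fun i hi => Finset.sum_congr rfl fun δ hδ => ?_
      simp only [Finset.mem_Icc, mem_Dp] at hi hδ
      have e : par (δ ++ [i]) = t ↔ par δ = (t + par [i]) % 2 := by
        rw [par_append]
        have := par_lt δ
        have := par_lt [i]
        omega
      simp only [e]
      have hs := hδ.2.2.1
      have e2 : F (α ++ (δ ++ [i])) ((b - (δ ++ [i]).sum) :: β)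
          = F (α ++ [i] ++ δ) ((b - i - δ.sum) :: β) := by
        have e3 : b - (δ ++ [i]).sum = b - i - δ.sum := by simp; omega
        rw [e3]
        refine hP _ _ _ _ (by simp; omega) (by simp; omega) ?_ (fun _ _ => rfl)
        intro v _
        simp only [List.count_append]; omega
      rw [e2]
    rw [key 0 (by norm_num), key 1 (by norm_num)]
    exact hx

def Tp (p : ℕ) : List ℕ → Finset (List (List ℕ))
  | [] => {[]}
  | b :: β => (Dp p b ×ˢ Tp p β).image fun x => x.1 :: x.2

def rests (β : List ℕ) (Δ : List (List ℕ)) : List ℕ := List.zipWith (fun b δ => b - δ.sum) β Δ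

lemma mem_Tp {p : ℕ} {β : List ℕ} {Δ : List (List ℕ)} :
    Δ ∈ Tp p β ↔ List.Forall₂ (Good p) β Δ := by
  induction β generalizing Δ with
  | nil => simp [Tp]
  | cons b β ih =>
    simp only [Tp, Finset.mem_image, Finset.mem_product, mem_Dp, ih, List.forall₂_cons_left_iff]
    constructor
    · rintro ⟨⟨δ, Δ'⟩, ⟨h1, h2⟩, rfl⟩
      exact ⟨δ, Δ', h1, h2, rfl⟩
    · rintro ⟨δ, Δ', h1, h2, rfl⟩
      exact ⟨(δ, Δ'), ⟨h1, h2⟩, rfl⟩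

lemma sum_Tp_cons (b : ℕ) (β : List ℕ) (g : List (List ℕ) → G) :
    ∑ Δ ∈ Tp p (b :: β), g Δ = ∑ δ ∈ Dp p b, ∑ Δ ∈ Tp p β, g (δ :: Δ) := by
  rw [Tp, Finset.sum_image, Finset.sum_product]
  rintro ⟨a, b⟩ _ ⟨c, d⟩ _ h
  simpa using h

lemma sum_rests {β : List ℕ} {Δ : List (List ℕ)} (h : List.Forall₂ (Good p) β Δ) :
    Δ.flatten.sum + (rests β Δ).sum = β.sum := by
  induction h with
  | nil => simp [rests]
  | cons h _ ih =>
    have := h.2.2.1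
    simp [rests] at ih ⊢
    omega

lemma multi_step (hP : FP F n) (hK : FK F n p) (β : List ℕ) : ∀ (α r : List ℕ),
    α.sum + β.sum + r.sum = n →
    F α (β ++ r) + ∑ Δ ∈ Tp p β, (if par Δ.flatten = 1 then F (α ++ Δ.flatten) (rests β Δ ++ r) else 0)
      = ∑ Δ ∈ Tp p β, (if par Δ.flatten = 0 then F (α ++ Δ.flatten) (rests β Δ ++ r) else 0) := by
  induction β with
  | nil => intro α r h; simp [Tp, par, rests]
  | cons b β ih =>
    intro α r h
    simp only [List.sum_cons] at h
    have hx := expand (Dp p b) par par_lt (F α (b :: β ++ r))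
      (fun δ => F (α ++ δ) ((b - δ.sum) :: (β ++ r)))
      (fun δ t => ∑ Δ ∈ Tp p β, (if par Δ.flatten = t then
        F (α ++ δ ++ Δ.flatten) (rests β Δ ++ (b - δ.sum) :: r) else 0))
      (single_step hP hK b α (β ++ r) (by simp; omega))
      (fun δ hδ => by
        rw [mem_Dp] at hδ
        have hs := hδ.2.2.1
        rw [← ih (α ++ δ) ((b - δ.sum) :: r) (by simp; omega)]
        congr 1
        refine hP _ _ _ _ (by simp; omega) (by simp; omega) (fun _ _ => rfl) ?_
        intro v _
        simp only [List.count_append, List.count_cons]; omega)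
    have key : ∀ t < 2, ∑ Δ ∈ Tp p (b :: β), (if par Δ.flatten = t then
          F (α ++ Δ.flatten) (rests (b :: β) Δ ++ r) else 0)
        = ∑ δ ∈ Dp p b, ∑ Δ ∈ Tp p β, (if par Δ.flatten = (t + par δ) % 2 then
        F (α ++ δ ++ Δ.flatten) (rests β Δ ++ (b - δ.sum) :: r) else 0) := by
      intro t ht
      rw [sum_Tp_cons]
      refine Finset.sum_congr rfl fun δ hδ => Finset.sum_congr rfl fun Δ hΔ => ?_
      rw [mem_Dp] at hδ
      rw [mem_Tp] at hΔ
      have e : par (δ :: Δ).flatten = t ↔ par Δ.flatten = (t + par δ) % 2 := by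
        rw [List.flatten_cons, par_append]
        have := par_lt δ
        have := par_lt Δ.flatten
        omega
      simp only [e]
      have hs := hδ.2.2.1
      have hr := sum_rests hΔ
      have e2 : F (α ++ (δ :: Δ).flatten) (rests (b :: β) (δ :: Δ) ++ r)
          = F (α ++ δ ++ Δ.flatten) (rests β Δ ++ (b - δ.sum) :: r) := by
        have e3 : rests (b :: β) (δ :: Δ) = (b - δ.sum) :: rests β Δ := rfl
        rw [e3]
        refine hP _ _ _ _ (by simp only [List.flatten_cons, List.sum_append, List.sum_cons, List.cons_append]; omega)
          (by simp only [List.sum_append, List.sum_cons]; omega) ?_ ?_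
        · intro v _
          rw [List.flatten_cons, List.append_assoc]
        · intro v _
          simp only [List.count_append, List.count_cons, List.cons_append]; omega
      rw [e2]
    rw [key 0 (by norm_num), key 1 (by norm_num)]
    exact hx

end comb
section count

universe u

lemma sortDesc_perm (l : List ℕ) : (sortDesc l).Perm l := by
  unfold sortDesc
  refine (List.reverse_perm _).trans ?_
  rw [← Multiset.coe_eq_coe, Multiset.sort_eq]

lemma sortDesc_sorted (l : List ℕ) : (sortDesc l).Pairwise (· ≥ ·) := by
  unfold sortDesc
  rw [List.pairwise_reverse]
  exact Multiset.pairwise_sort _ _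

lemma sortDesc_eq_iff {a b : List ℕ} (hb : b.Pairwise (· ≥ ·)) : sortDesc a = b ↔ a.Perm b := by
  constructor
  · rintro rfl; exact (sortDesc_perm a).symm
  · intro h
    refine List.Perm.eq_of_pairwise ?_ (sortDesc_sorted a) hb ((sortDesc_perm a).trans h)
    intro x y _ _ h1 h2
    exact le_antisymm h2 h1

lemma length_le_sum_pos {l : List ℕ} (h : ∀ x ∈ l, 0 < x) : l.length ≤ l.sum := by
  induction l with
  | nil => simp
  | cons a l ih =>
    have := ih (fun x hx => h x (by simp [hx]))
    have := h a (by simp)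
    simp; omega

lemma epsL_par {l : List ℕ} (h : ∀ x ∈ l, 0 < x) : epsL l = if par l = 0 then 1 else -1 := by
  have h1 := length_le_sum_pos h
  unfold epsL par
  split_ifs with h2
  · exact Even.neg_one_pow (by rw [Nat.even_iff]; omega)
  · exact Odd.neg_one_pow (by rw [Nat.odd_iff]; omega)

lemma epsL_append {l l' : List ℕ} (h : ∀ x ∈ l, 0 < x) (h' : ∀ x ∈ l', 0 < x) :
    epsL (l ++ l') = epsL l * epsL l' := by
  have h1 := length_le_sum_pos h
  have h2 := length_le_sum_pos h'
  unfold epsL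
  rw [← pow_add]
  congr 1
  simp; omega

lemma numCompM_eq {p b : ℕ} {l : List ℕ} (h : MemPnm b p l) :
    numCompM p l = ((Dp p b).filter fun δ => sortDesc δ = l).card := by
  obtain ⟨⟨h1, h2⟩, h3, h4⟩ := h
  unfold numCompM
  rw [← List.toFinset_card_of_nodup ((List.nodup_dedup _).filter _)]
  congr 1
  ext δ
  simp only [List.mem_toFinset, List.mem_filter, List.mem_dedup, List.mem_permutations,
    decide_eq_true_eq, Finset.mem_filter, mem_Dp, sortDesc_eq_iff h1]
  constructor
  · rintro ⟨h5, h6⟩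
    refine ⟨⟨fun x hx => h2 x (h5.mem_iff.1 hx), h6, ?_, ?_⟩, h5⟩
    · rwa [h5.sum_eq]
    · rwa [h5.sum_eq]
  · rintro ⟨h5, h6⟩
    exact ⟨h6, h5.2.1⟩

lemma prod_eq (p : ℕ) {β : List ℕ} {L : List (List ℕ)}
    (h : List.Forall₂ (fun b l => MemPnm b p l) β L) :
    ∏ i ∈ Finset.range β.length, epsL (L.getD i []) * (numCompM p (L.getD i []) : ℤ)
      = epsL L.flatten * (((Tp p β).filter fun Δ => Δ.map sortDesc = L).card : ℤ) := by
  induction h with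
  | nil =>
    have : (Finset.filter (fun Δ : List (List ℕ) => Δ.map sortDesc = []) (Tp p [])) = {[]} := by
      ext Δ; simp [Tp]
    rw [this]; simp [epsL]
  | @cons b l β L h hL ih =>
    rw [List.length_cons, Finset.prod_range_succ']
    simp only [List.getD_cons_succ, List.getD_cons_zero]
    have hp : ∀ x ∈ L.flatten, 0 < x := by
      clear ih
      induction hL with
      | nil => simp
      | cons h _ ih =>
        intro x hx
        rw [List.flatten_cons, List.mem_append] at hx
        exact hx.elim (h.1.2 x) (ih x)
    have hc : ((Tp p (b :: β)).filter fun Δ => Δ.map sortDesc = l :: L).card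
        = ((Dp p b).filter fun δ => sortDesc δ = l).card *
          ((Tp p β).filter fun Δ => Δ.map sortDesc = L).card := by
      rw [Finset.card_filter, sum_Tp_cons, Finset.card_filter, Finset.card_filter,
        Finset.sum_mul_sum]
      refine Finset.sum_congr rfl fun δ _ => Finset.sum_congr rfl fun Δ _ => ?_
      by_cases h1 : sortDesc δ = l <;> by_cases h2 : Δ.map sortDesc = L <;> simp [h1, h2]
    rw [ih, hc, List.flatten_cons, epsL_append h.1.2 hp, numCompM_eq h]
    push_cast
    ring

def qmap (p : ℕ) (β : List ℕ) (Δ : List (List ℕ)) : List ℕ × List ℕ :=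
  (sortDesc Δ.flatten, sortDesc (((rests β Δ).filter fun x => decide (x ≠ 0)).map (· / p)))

lemma flatten_map_sort (Δ : List (List ℕ)) : (Δ.map sortDesc).flatten.Perm Δ.flatten := by
  induction Δ with
  | nil => simp
  | cons δ Δ ih =>
    simp only [List.map_cons, List.flatten_cons]
    exact (sortDesc_perm δ).append ih

lemma rests_map_sort (β : List ℕ) (Δ : List (List ℕ)) : rests β (Δ.map sortDesc) = rests β Δ := by
  unfold rests
  rw [List.zipWith_map_right]
  congr 1
  ext b δ
  rw [(sortDesc_perm δ).sum_eq]

lemma rests_range {β : List ℕ} {L : List (List ℕ)} (h : L.length = β.length) :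
    ((List.range β.length).map fun i => β.getD i 0 - (L.getD i []).sum) = rests β L := by
  apply List.ext_getElem
  · simp [rests, h]
  · intro i h1 h2
    simp at h1
    simp [rests, h1, h]

lemma rests_dvd {p : ℕ} {β : List ℕ} {Δ : List (List ℕ)} (h : List.Forall₂ (Good p) β Δ) :
    ∀ x ∈ rests β Δ, p ∣ x := by
  induction h with
  | nil => simp [rests]
  | cons h _ ih =>
    intro x hx
    simp only [rests, List.zipWith_cons_cons, List.mem_cons] at hx
    rcases hx with rfl | hx
    · exact h.2.2.2
    · exact ih x hx

lemma good_pos {p : ℕ} {β : List ℕ} {Δ : List (List ℕ)} (h : List.Forall₂ (Good p) β Δ) :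
    ∀ x ∈ Δ.flatten, 0 < x := by
  induction h with
  | nil => simp
  | cons h _ ih =>
    intro x hx
    rw [List.flatten_cons, List.mem_append] at hx
    exact hx.elim (h.1 x) (ih x)

lemma good_mem {p : ℕ} {β : List ℕ} {Δ : List (List ℕ)} (h : List.Forall₂ (Good p) β Δ) :
    List.Forall₂ (fun b l => MemPnm b p l) β (Δ.map sortDesc) := by
  induction h with
  | nil => simp
  | @cons b δ β Δ h _ ih =>
    refine List.Forall₂.cons ⟨⟨sortDesc_sorted _, fun x hx => h.1 x ?_⟩, ?_, ?_⟩ ih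
    · exact (sortDesc_perm δ).mem_iff.1 hx
    · rw [(sortDesc_perm δ).sum_eq]; exact h.2.2.1
    · rw [(sortDesc_perm δ).sum_eq]; exact h.2.2.2

lemma mem_iff_forall2 {p : ℕ} {β : List ℕ} {L : List (List ℕ)} :
    (L.length = β.length ∧ ∀ i < β.length, MemPnm (β.getD i 0) p (L.getD i [])) ↔
      List.Forall₂ (fun b l => MemPnm b p l) β L := by
  rw [List.forall₂_iff_get]
  constructor
  · rintro ⟨h1, h2⟩
    refine ⟨h1.symm, fun i hi hi' => ?_⟩
    have := h2 i hi
    simpa [List.getD_eq_getElem, hi, hi'] using this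
  · rintro ⟨h1, h2⟩
    refine ⟨h1.symm, fun i hi => ?_⟩
    have := h2 i hi (h1 ▸ hi)
    simpa [List.getD_eq_getElem, hi, h1 ▸ hi] using this

lemma map_mul_div {p : ℕ} (_hp : 0 < p) {l : List ℕ} (h : ∀ x ∈ l, p ∣ x) :
    (l.map (· / p)).map (p * ·) = l := by
  rw [List.map_map]
  conv_rhs => rw [← List.map_id l]
  refine List.map_congr_left fun x hx => ?_
  exact Nat.mul_div_cancel' (h x hx)

lemma perm_iff {p : ℕ} (hp : 0 < p) {l μ : List ℕ} (h : ∀ x ∈ l, p ∣ x) :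
    l.Perm (μ.map (p * ·)) ↔ (l.map (· / p)).Perm μ := by
  constructor
  · intro h1
    have := h1.map (· / p)
    rw [List.map_map] at this
    have e : μ.map ((· / p) ∘ (p * ·)) = μ := by
      conv_rhs => rw [← List.map_id μ]
      refine List.map_congr_left fun x hx => ?_
      simp [hp]
    rwa [e] at this
  · intro h1
    have := h1.map (p * ·)
    rwa [map_mul_div hp h] at this

lemma vmem_iff {p : ℕ} (hp : 0 < p) {β ξ μ : List ℕ} (hξ : IsPartitionL ξ) (hμ : IsPartitionL μ)
    {Δ : List (List ℕ)} (h : List.Forall₂ (Good p) β Δ) :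
    Vmem p β ξ μ (Δ.map sortDesc) ↔ qmap p β Δ = (ξ, μ) := by
  unfold Vmem
  rw [← and_assoc, mem_iff_forall2, and_iff_right (good_mem h)]
  rw [rests_range (by simpa using h.length_eq.symm), rests_map_sort,
    perm_iff hp (fun x hx => rests_dvd h x (List.mem_filter.1 hx).1)]
  unfold qmap
  rw [Prod.mk.injEq, sortDesc_eq_iff hξ.1, sortDesc_eq_iff hμ.1]
  refine and_congr_left fun _ => ?_
  exact ⟨fun h => (flatten_map_sort Δ).symm.trans h, fun h => (flatten_map_sort Δ).trans h⟩

lemma qmap_cond {p n : ℕ} (hp : 0 < p) {α β : List ℕ} (hn : α.sum + β.sum = n)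
    {Δ : List (List ℕ)} (h : List.Forall₂ (Good p) β Δ) : CondPair p n α (qmap p β Δ) := by
  have hd := rests_dvd h
  have hs := sum_rests h
  refine ⟨⟨sortDesc_sorted _, fun x hx => good_pos h x ((sortDesc_perm _).mem_iff.1 hx)⟩,
    ⟨sortDesc_sorted _, fun x hx => ?_⟩, ?_⟩
  · have hx := (sortDesc_perm _).mem_iff.1 hx
    simp only [List.mem_map, List.mem_filter, decide_eq_true_eq] at hx
    obtain ⟨y, ⟨hy, hy0⟩, rfl⟩ := hx
    exact Nat.div_pos (Nat.le_of_dvd (by omega) (hd y hy)) hp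
  · simp only [qmap]
    rw [(sortDesc_perm _).sum_eq, (sortDesc_perm _).sum_eq, ← List.map_id (List.map (· / p) _),
      ← List.sum_map_mul_left]
    change _ + _ + (List.map (p * ·) _).sum = n
    rw [map_mul_div hp (fun x hx => hd x (List.mem_filter.1 hx).1)]
    have e : ∀ l : List ℕ, (l.filter fun x => decide (x ≠ 0)).sum = l.sum := by
      intro l
      induction l with
      | nil => simp
      | cons a l ih =>
        by_cases ha : a = 0
        · simp [ha] at ih ⊢; exact ih
        · simp [ha] at ih ⊢; exact ih
    rw [e]; omega

def Nq (p : ℕ) (β : List ℕ) (q : List ℕ × List ℕ) : ℕ :=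
  ((Tp p β).filter fun Δ => qmap p β Δ = q).card

lemma cB_eq {p : ℕ} (hp : 0 < p) {β ξ μ : List ℕ} (hξ : IsPartitionL ξ) (hμ : IsPartitionL μ) :
    cB p β ξ μ = epsL ξ * (Nq p β (ξ, μ) : ℤ) := by
  unfold cB
  set t := ((Tp p β).filter fun Δ => qmap p β Δ = (ξ, μ)).image (List.map sortDesc) with ht
  have hval : ∀ L, Vmem p β ξ μ L → ∏ i ∈ Finset.range β.length,
      epsL (L.getD i []) * (numCompM p (L.getD i []) : ℤ)
      = epsL ξ * (((Tp p β).filter fun Δ => Δ.map sortDesc = L).card : ℤ) := by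
    intro L hL
    rw [prod_eq p (mem_iff_forall2.1 ⟨hL.1, hL.2.1⟩)]
    congr 1
    unfold epsL
    rw [hL.2.2.1.sum_eq, hL.2.2.1.length_eq]
  have htV : ∀ L ∈ t, Vmem p β ξ μ L := by
    intro L hL
    simp only [ht, Finset.mem_image, Finset.mem_filter, mem_Tp] at hL
    obtain ⟨Δ, ⟨h1, h2⟩, rfl⟩ := hL
    exact (vmem_iff hp hξ hμ h1).2 h2
  rw [finsum_mem_eq_sum_of_inter_support_eq (t := t)]
  · rw [Finset.sum_congr rfl fun L hL => hval L (htV L hL), ← Finset.mul_sum, Nq,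
      Finset.card_eq_sum_card_image (List.map sortDesc)]
    push_cast
    congr 1
    refine Finset.sum_congr rfl fun L hL => ?_
    rw [Finset.filter_filter]
    congr 2
    refine Finset.filter_congr fun Δ hΔ => ?_
    rw [mem_Tp] at hΔ
    constructor
    · intro h
      exact ⟨(vmem_iff hp hξ hμ hΔ).1 (h ▸ htV L hL), h⟩
    · exact fun h => h.2
  · ext L
    simp only [Set.mem_inter_iff, Set.mem_ofPred_eq, Function.mem_support, Finset.mem_coe]
    constructor
    · rintro ⟨h1, h2⟩
      refine ⟨?_, h2⟩
      rw [hval L h1] at h2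
      have h3 : ((Tp p β).filter fun Δ => Δ.map sortDesc = L).Nonempty := by
        rw [← Finset.card_pos]
        by_contra h0
        apply h2
        have h0 : ((Tp p β).filter fun Δ => Δ.map sortDesc = L).card = 0 := by omega
        rw [h0]; simp
      obtain ⟨Δ, hΔ⟩ := h3
      rw [Finset.mem_filter, mem_Tp] at hΔ
      rw [ht, Finset.mem_image]
      refine ⟨Δ, ?_, hΔ.2⟩
      rw [Finset.mem_filter, mem_Tp]
      exact ⟨hΔ.1, (vmem_iff hp hξ hμ hΔ.1).1 (hΔ.2 ▸ h1)⟩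
    · rintro ⟨h1, h2⟩
      exact ⟨htV L h1, h2⟩

lemma Nq_zero {p n : ℕ} (hp : 0 < p) {α β : List ℕ} (hn : α.sum + β.sum = n)
    {q : List ℕ × List ℕ} (hq : ¬ CondPair p n α q) : Nq p β q = 0 := by
  unfold Nq
  rw [Finset.card_eq_zero, Finset.filter_eq_empty_iff]
  rintro Δ hΔ rfl
  exact hq (qmap_cond hp hn (mem_Tp.1 hΔ))

lemma negMult_eq {p n : ℕ} (hp : 0 < p) {α β : List ℕ} (hn : α.sum + β.sum = n)
    (q : List ℕ × List ℕ) : negMult p n α β q = if par q.1 = 1 then Nq p β q else 0 := by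
  unfold negMult
  by_cases hq : CondPair p n α q
  · have hc := cB_eq (β := β) hp hq.1 hq.2.1
    rw [epsL_par hq.1.2] at hc
    have := par_lt q.1
    rw [hc]
    simp only [hq, true_and]
    by_cases h0 : par q.1 = 0
    · simp [h0]
    · have h1 : par q.1 = 1 := by omega
      simp [h1]
      omega
  · simp [hq, Nq_zero hp hn hq]

lemma posMult_eq {p n : ℕ} (hp : 0 < p) {α β : List ℕ} (hn : α.sum + β.sum = n)
    (q : List ℕ × List ℕ) : posMult p n α β q = if par q.1 = 0 then Nq p β q else 0 := by
  unfold posMult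
  by_cases hq : CondPair p n α q
  · have hc := cB_eq (β := β) hp hq.1 hq.2.1
    rw [epsL_par hq.1.2] at hc
    have := par_lt q.1
    rw [hc]
    simp only [hq, true_and]
    by_cases h0 : par q.1 = 0
    · simp [h0]
      omega
    · have h1 : par q.1 = 1 := by omega
      simp [h1]
  · simp [hq, Nq_zero hp hn hq]

lemma fiber_sum {G : Type*} [AddCommMonoid G] {F : List ℕ → List ℕ → G} {p n : ℕ} (hp : 0 < p)
    (hP : FP F n) {α β : List ℕ} (hn : α.sum + β.sum = n) (t : ℕ) :
    ∑ Δ ∈ Tp p β, (if par Δ.flatten = t then F (α ++ Δ.flatten) (rests β Δ) else 0)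
      = ∑ q ∈ (Tp p β).image (qmap p β), (if par q.1 = t then Nq p β q else 0) •
        F (sortDesc (α ++ q.1)) (q.2.map (p * ·)) := by
  rw [← Finset.sum_fiberwise_of_maps_to
    (fun Δ hΔ => Finset.mem_image_of_mem (qmap p β) hΔ)]
  refine Finset.sum_congr rfl fun q _ => ?_
  have key : ∀ Δ ∈ (Tp p β).filter (fun Δ => qmap p β Δ = q),
      (if par Δ.flatten = t then F (α ++ Δ.flatten) (rests β Δ) else 0)
      = if par q.1 = t then F (sortDesc (α ++ q.1)) (q.2.map (p * ·)) else 0 := by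
    intro Δ hΔ
    rw [Finset.mem_filter, mem_Tp] at hΔ
    obtain ⟨hΔ, rfl⟩ := hΔ
    have hp1 : par (qmap p β Δ).1 = par Δ.flatten := by
      unfold par qmap
      rw [(sortDesc_perm _).sum_eq, (sortDesc_perm _).length_eq]
    rw [hp1]
    have hc := qmap_cond hp hn hΔ
    have hs := sum_rests hΔ
    have e : F (α ++ Δ.flatten) (rests β Δ)
        = F (sortDesc (α ++ (qmap p β Δ).1)) ((qmap p β Δ).2.map (p * ·)) := by
      refine hP _ _ _ _ (by rw [List.sum_append]; omega) ?_ ?_ ?_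
      · rw [(sortDesc_perm _).sum_eq, List.sum_append, List.sum_map_mul_left, List.map_id']
        exact hc.2.2
      · intro v _
        rw [(sortDesc_perm _).count_eq]
        simp only [qmap, List.count_append]
        rw [(sortDesc_perm _).count_eq]
      · intro v hv
        have h2 := (sortDesc_perm (((rests β Δ).filter fun x => decide (x ≠ 0)).map (· / p))).map
          (p * ·)
        rw [map_mul_div hp (fun x hx => rests_dvd hΔ x (List.mem_filter.1 hx).1)] at h2
        simp only [qmap]
        rw [h2.count_eq, List.count_filter (by simpa using hv)]
    rw [e]
  rw [Finset.sum_congr rfl key, Finset.sum_const]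
  unfold Nq
  split_ifs <;> simp

lemma cls_dsum {R : Type u} [Ring R] (Q : Finset (List ℕ × List ℕ)) (m : List ℕ × List ℕ → ℕ)
    (hm : ∀ q, q ∉ Q → m q = 0) (M : List ℕ × List ℕ → Type u)
    [∀ q, AddCommGroup (M q)] [∀ q, Module R (M q)] :
    cls R (⨁ t : Σ q : List ℕ × List ℕ, Fin (m q), M t.1) = ∑ q ∈ Q, m q • cls R (M q) := by
  classical
  let _ : Fintype (Σ q : List ℕ × List ℕ, Fin (m q)) := ⟨Q.sigma fun _ => Finset.univ, by
    rintro ⟨q, i⟩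
    simp only [Finset.mem_sigma, Finset.mem_univ, and_true]
    by_contra h
    have := hm q h
    have := i.2
    omega⟩
  rw [cls_directSum]
  change ∑ t ∈ Q.sigma (fun q => (Finset.univ : Finset (Fin (m q)))), cls R (M t.1) = _
  rw [Finset.sum_sigma]
  refine Finset.sum_congr rfl fun q _ => ?_
  change ∑ _s : Fin (m q), cls R (M q) = _
  rw [Finset.sum_const, Finset.card_univ, Fintype.card_fin]

end count
theorem stmt12 (k : Type*) [Field k] (p : ℕ) (hp : p.Prime) (hodd : Odd p) [CharP k p]
    {n : ℕ} (α β : List ℕ) (hα : ∀ x ∈ α, 0 < x) (hβ : ∀ x ∈ β, 0 < x)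
    (hn : α.sum + β.sum = n) :
    Nonempty (
      (SYPM k n α β ×
        ⨁ t : Σ q : List ℕ × List ℕ, Fin (negMult p n α β q),
          SYPM k n (sortDesc (α ++ t.1.1)) (t.1.2.map (p * ·)))
      ≃ₗ[GA k n]
      ⨁ t : Σ q : List ℕ × List ℕ, Fin (posMult p n α β q),
          SYPM k n (sortDesc (α ++ t.1.1)) (t.1.2.map (p * ·))) := by
  classical
  have hp0 : 0 < p := hp.pos
  set F : List ℕ → List ℕ → IsoCls (GA k n) := fun a b => cls (GA k n) (SYPM k n a b) with hF
  have hP : FP F n := by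
    intro a b a' b' h h' h1 h2
    exact cls_count k h h' h1 h2
  have hK : FK F n p := by
    intro a b m h hm
    exact cls_koszul k h (fun h0 => hm ((CharP.cast_eq_zero_iff k p m).1 h0))
  have hms := multi_step hP hK β α [] (by simpa using hn)
  simp only [List.append_nil] at hms
  rw [fiber_sum hp0 hP hn, fiber_sum hp0 hP hn] at hms
  have hN : ∀ q, q ∉ (Tp p β).image (qmap p β) → Nq p β q = 0 := by
    intro q hq
    unfold Nq
    rw [Finset.card_eq_zero, Finset.filter_eq_empty_iff]
    intro Δ hΔ h
    exact hq (Finset.mem_image.2 ⟨Δ, hΔ, h⟩)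
  have h1 := cls_dsum (R := GA k n) ((Tp p β).image (qmap p β)) (negMult p n α β)
    (fun q hq => by rw [negMult_eq hp0 hn, hN q hq]; simp)
    (fun q => SYPM k n (sortDesc (α ++ q.1)) (q.2.map (p * ·)))
  have h2 := cls_dsum (R := GA k n) ((Tp p β).image (qmap p β)) (posMult p n α β)
    (fun q hq => by rw [posMult_eq hp0 hn, hN q hq]; simp)
    (fun q => SYPM k n (sortDesc (α ++ q.1)) (q.2.map (p * ·)))
  have e1 := h1.trans (Finset.sum_congr rfl fun q _ => by rw [negMult_eq hp0 hn])
  have e2 := h2.trans (Finset.sum_congr rfl fun q _ => by rw [posMult_eq hp0 hn])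
  have hfin : cls (GA k n) (SYPM k n α β ×
        ⨁ t : Σ q : List ℕ × List ℕ, Fin (negMult p n α β q),
          SYPM k n (sortDesc (α ++ t.1.1)) (t.1.2.map (p * ·)))
      = cls (GA k n) (⨁ t : Σ q : List ℕ × List ℕ, Fin (posMult p n α β q),
          SYPM k n (sortDesc (α ++ t.1.1)) (t.1.2.map (p * ·))) := by
    rw [cls_prod]
    exact (congrArg (fun x => F α β + x) e1).trans (hms.trans e2.symm)
  exact cls_eq_iff.1 hfin
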